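/- Let d = 2. For every r > 0 and every positive integer n, let u_{r,n} be a mild solution of ∂_t u = (1/2)Δu - u² with initial data n·1_{B(r)}, and set u_r(t,x) := sup_{n ≥ 1} u_{r,n}(t,x). Then lim_{r→∞} (π r²)^{-1} ∫_{ℝ²} u_r(1,x) dx = 1. (This is the analytic core of the theorem that for a critical binary super-Brownian motion on ℝ² started from a Poisson random measure with Lebesgue intensity, the radius R_t of the largest empty ball centered at the origin satisfies lim_{t→∞} P(R_t/√t ≥ r) = e^{-A₂(r)} with lim_{r→∞} A₂(r)/(π r²) = 1.) -/

import Mathlib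

/-!
The mass at time `1` of `u_r` is squeezed between `πr²` and `(1 + O(r⁻⁴)) π(1+δ)²r²` for every
`δ > 0`, without any explicit description of `u_r`.

*Comparison.* On bounded solutions the mild equation is a contraction after multiplication by
`exp(2Nt)`, which gives monotonicity in the data (`BddMild.compare`). So `u_{r,n}` increases in
`n`, and comparison with the spatially constant solution gives `u_{r,n}(t,x) ≤ n/(1+nt)`
(`BddMild.le_ode`).

*Lower bound.* Integrating the equation over space gives `∫u(t) + ∫₀ᵗ∫u² = ∫φ`. Since
`u² ≤ u n/(1+nt)`, the function `(1+nt)∫u(t)` is nondecreasing, so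
`∫u_{r,n}(1) ≥ πr² n/(n+1)` (`BddMild.le_integral_one`).

*Upper bound.* Let `χ` be a cutoff that is `1` on `B(r)` and vanishes off `B((1+δ)r)`, with
`(½Δχ)² ≤ C r⁻⁴ (1-χ)` (`exists_cutoff`, by scaling of a function `1 - G⁴`). Writing
`∫u(1) = ∫φ - ∫₀¹∫u²` and using `d/dt ∫uχ = ∫(u ½Δχ - u²χ)` with the weight `1 - t²`, the mass
`∫φ = ∫φχ` cancels, and
`∫u(1) = ∫₀¹∫ [2t uχ - t² u²χ] + [-(1-χ)u² - (1-t²) u ½Δχ] dx dt`.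
Completing the squares, the first bracket is at most `χ` and the second at most `C r⁻⁴/4`; off
`B((1+δ)r)` their sum is `-u² ≤ 0`. The bound does not depend on `n`
(`BddMild.integral_one_le`).

The weak form of the equation used here is derived from the mild one by duality
(`IsMildE.weak`) and the identity `P_tχ = χ + ∫₀ᵗ P_s(½Δχ) ds` (`heatSg_generator`), itself a
Gaussian integration by parts.
-/

open MeasureTheory Filter Set Metric
open scoped ENNReal

/-- The `d`-dimensional heat kernel `p_t(x,y) = (2πt)^{-d/2} exp(-‖x-y‖²/(2t))`. -/
noncomputable def heatKernel (d : ℕ) (t : ℝ) (x y : EuclideanSpace ℝ (Fin d)) : ℝ :=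
  (2 * Real.pi * t) ^ (-(d : ℝ) / 2) * Real.exp (-‖x - y‖ ^ 2 / (2 * t))

/-- `u : (0,∞) × ℝ^d → [0,∞)` is a mild solution of `∂ₜu = (1/2)Δu - u²` with initial
data `φ` if it is measurable, nonnegative, and satisfies for all `t > 0`, `x ∈ ℝ^d`:
`u(t,x) + ∫₀ᵗ ∫ p_s(x,y) u(t-s,y)² dy ds = ∫ p_t(x,y) φ(y) dy` (equality in `[0,∞]`). -/
def IsMildSolution (d : ℕ) (φ : EuclideanSpace ℝ (Fin d) → ℝ)
    (u : ℝ → EuclideanSpace ℝ (Fin d) → ℝ) : Prop :=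
  Measurable (Function.uncurry u) ∧
  (∀ t x, 0 ≤ u t x) ∧
  ∀ t x, 0 < t →
    ENNReal.ofReal (u t x) +
        (∫⁻ s in Set.Ioo (0 : ℝ) t, ∫⁻ y,
          ENNReal.ofReal (heatKernel d s x y * u (t - s) y ^ 2)) =
      ∫⁻ y, ENNReal.ofReal (heatKernel d t x y * φ y)

/-! ### The heat kernel -/

lemma heatKernel_pos (d : ℕ) {t : ℝ} (ht : 0 < t) (x y : EuclideanSpace ℝ (Fin d)) :
    0 < heatKernel d t x y := by
  unfold heatKernel; positivity

lemma heatKernel_nonneg (d : ℕ) {t : ℝ} (ht : 0 < t) (x y : EuclideanSpace ℝ (Fin d)) :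
    0 ≤ heatKernel d t x y := (heatKernel_pos d ht x y).le

lemma heatKernel_symm (d : ℕ) (t : ℝ) (x y : EuclideanSpace ℝ (Fin d)) :
    heatKernel d t x y = heatKernel d t y x := by
  unfold heatKernel; rw [norm_sub_rev]

lemma measurable_heatKernel (d : ℕ) :
    Measurable fun p : ℝ × EuclideanSpace ℝ (Fin d) × EuclideanSpace ℝ (Fin d) =>
      heatKernel d p.1 p.2.1 p.2.2 := by
  unfold heatKernel
  fun_prop

/-- The heat kernel with values in `[0, ∞]`. -/
noncomputable def hk (d : ℕ) (t : ℝ) (x y : EuclideanSpace ℝ (Fin d)) : ℝ≥0∞ :=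
  ENNReal.ofReal (heatKernel d t x y)

lemma hk_symm (d : ℕ) (t : ℝ) (x y : EuclideanSpace ℝ (Fin d)) :
    hk d t x y = hk d t y x := by
  unfold hk; rw [heatKernel_symm]

lemma measurable_hk (d : ℕ) {α : Type*} [MeasurableSpace α] {t : α → ℝ}
    {x y : α → EuclideanSpace ℝ (Fin d)} (ht : Measurable t) (hx : Measurable x)
    (hy : Measurable y) : Measurable fun a => hk d (t a) (x a) (y a) :=
  ENNReal.measurable_ofReal.comp
    ((measurable_heatKernel d).comp (ht.prodMk (hx.prodMk hy)))

lemma integrable_exp_neg_sq {d : ℕ} {b : ℝ} (hb : 0 < b) :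
    Integrable fun z : EuclideanSpace ℝ (Fin d) => Real.exp (-b * ‖z‖ ^ 2) := by
  by_contra h
  have h1 := GaussianFourier.integral_rexp_neg_mul_sq_norm
    (V := EuclideanSpace ℝ (Fin d)) hb
  rw [integral_undef h] at h1
  have : (0 : ℝ) < (Real.pi / b) ^ (Module.finrank ℝ (EuclideanSpace ℝ (Fin d)) / 2 : ℝ) := by
    positivity
  linarith

lemma integrable_heatKernel (d : ℕ) {t : ℝ} (ht : 0 < t) (x : EuclideanSpace ℝ (Fin d)) :
    Integrable fun y => heatKernel d t x y := by
  have h := (integrable_exp_neg_sq (d := d) (b := 1 / (2 * t)) (by positivity)).comp_sub_left x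
  refine (h.const_mul ((2 * Real.pi * t) ^ (-(d : ℝ) / 2))).congr (ae_of_all _ fun y => ?_)
  simp only [heatKernel]
  congr 2
  ring

lemma integral_heatKernel (d : ℕ) {t : ℝ} (ht : 0 < t) (x : EuclideanSpace ℝ (Fin d)) :
    ∫ y, heatKernel d t x y = 1 := by
  have h1 := GaussianFourier.integral_rexp_neg_mul_sq_norm
    (V := EuclideanSpace ℝ (Fin d)) (b := 1 / (2 * t)) (by positivity)
  rw [← integral_sub_left_eq_self _ volume x] at h1
  have h2 : (fun y => heatKernel d t x y) = fun y => (2 * Real.pi * t) ^ (-(d : ℝ) / 2) *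
      Real.exp (-(1 / (2 * t)) * ‖x - y‖ ^ 2) := by
    funext y
    simp only [heatKernel]
    congr 2
    ring
  rw [h2, integral_const_mul, h1, finrank_euclideanSpace, Fintype.card_fin,
    show Real.pi / (1 / (2 * t)) = 2 * Real.pi * t by field_simp,
    ← Real.rpow_add (by positivity), neg_div, neg_add_cancel, Real.rpow_zero]

lemma lintegral_hk (d : ℕ) {t : ℝ} (ht : 0 < t) (x : EuclideanSpace ℝ (Fin d)) :
    ∫⁻ y, hk d t x y = 1 := by
  unfold hk
  rw [← ofReal_integral_eq_lintegral_ofReal (integrable_heatKernel d ht x)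
    (ae_of_all _ fun y => heatKernel_nonneg d ht x y), integral_heatKernel d ht, ENNReal.ofReal_one]

/-- Completing the square in the product of two heat kernels. -/
lemma heatKernel_mul (d : ℕ) {s t : ℝ} (hs : 0 < s) (ht : 0 < t)
    (x y z : EuclideanSpace ℝ (Fin d)) :
    heatKernel d s x y * heatKernel d t y z = heatKernel d (s + t) x z *
      heatKernel d (s * t / (s + t)) ((t / (s + t)) • x + (s / (s + t)) • z) y := by
  have hst : 0 < s + t := by positivity
  simp only [heatKernel]
  rw [mul_mul_mul_comm, mul_mul_mul_comm (_ ^ _) (Real.exp _) (_ ^ _) (Real.exp (-‖_ - y‖ ^ 2 / _)),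
    ← Real.exp_add, ← Real.exp_add,
    ← Real.mul_rpow (by positivity) (by positivity),
    ← Real.mul_rpow (by positivity) (by positivity)]
  congr 2
  · field_simp
  · set a := x - y with ha
    set b := y - z with hb
    have e1 : x - z = a + b := by simp [ha, hb]
    have e2 : (t / (s + t)) • x + (s / (s + t)) • z - y
        = (t / (s + t)) • a - (s / (s + t)) • b := by
      have : y = (t / (s + t)) • y + (s / (s + t)) • y := by
        rw [← add_smul, ← add_div, add_comm t s, div_self hst.ne', one_smul]
      rw [ha, hb, smul_sub, smul_sub]
      nth_rewrite 1 [this]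
      abel
    rw [e1, e2, norm_add_sq_real a b, norm_sub_sq_real ((t / (s + t)) • a), norm_smul, norm_smul, inner_smul_left,
      inner_smul_right]
    simp only [Real.norm_eq_abs, mul_pow, sq_abs, conj_trivial]
    field_simp
    ring

/-- The Chapman-Kolmogorov equation. -/
lemma lintegral_hk_mul_hk (d : ℕ) {s t : ℝ} (hs : 0 < s) (ht : 0 < t)
    (x z : EuclideanSpace ℝ (Fin d)) :
    ∫⁻ y, hk d s x y * hk d t y z = hk d (s + t) x z := by
  have hst : 0 < s + t := by positivity
  have : ∀ y, hk d s x y * hk d t y z = hk d (s + t) x z *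
      hk d (s * t / (s + t)) ((t / (s + t)) • x + (s / (s + t)) • z) y := by
    intro y
    unfold hk
    rw [← ENNReal.ofReal_mul (heatKernel_nonneg d hs _ _), heatKernel_mul d hs ht,
      ENNReal.ofReal_mul (heatKernel_nonneg d hst _ _)]
  simp_rw [this]
  rw [lintegral_const_mul _ (measurable_hk d measurable_const measurable_const measurable_id'),
    lintegral_hk d (by positivity), mul_one]

/-- Integration by parts for a `C¹` weight `a` and a primitive `c + ∫₀ᵗ q` of an integrable `q`. -/
lemma weight_mul_primitive {q a a' : ℝ → ℝ} {T : ℝ} (c : ℝ)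
    (hq : IntervalIntegrable q volume 0 T) (ha : ∀ t, HasDerivAt a (a' t) t)
    (ha' : Continuous a') :
    a T * (c + ∫ s in (0 : ℝ)..T, q s) =
      a 0 * c + ∫ t in (0 : ℝ)..T, (a' t * (c + ∫ s in (0 : ℝ)..t, q s) + a t * q t) := by
  have hda : deriv a = a' := funext fun t => (ha t).deriv
  have h1 : AbsolutelyContinuousOnInterval a 0 T := by
    apply ContDiffOn.absolutelyContinuousOnInterval
    refine ContDiff.contDiffOn (contDiff_one_iff_deriv.2 ⟨fun t => (ha t).differentiableAt, ?_⟩)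
    rwa [hda]
  have h2 : AbsolutelyContinuousOnInterval (fun t => ∫ s in (0 : ℝ)..t, q s) 0 T :=
    hq.absolutelyContinuousOnInterval_intervalIntegral (by simp)
  have h3 : AbsolutelyContinuousOnInterval (fun t => c + ∫ s in (0 : ℝ)..t, q s) 0 T := by
    have h4 : AbsolutelyContinuousOnInterval (fun _ : ℝ => c) 0 T :=
      contDiff_const.contDiffOn.absolutelyContinuousOnInterval
    exact h4.add h2
  have h4 := h1.integral_deriv_mul_eq_sub h3
  have h5 : ∫ t in (0 : ℝ)..T, (a' t * (c + ∫ s in (0 : ℝ)..t, q s) + a t * q t) =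
      ∫ t in (0 : ℝ)..T, deriv a t * (c + ∫ s in (0 : ℝ)..t, q s) +
        a t * deriv (fun t => c + ∫ s in (0 : ℝ)..t, q s) t := by
    apply intervalIntegral.integral_congr_ae
    filter_upwards [hq.ae_hasDerivAt_integral] with t ht htm
    have := (ht (uIoc_subset_uIcc htm) 0 (by simp)).const_add c
    rw [this.deriv, hda]
  rw [h5, h4]
  simp

/-! ### The heat semigroup and the dual form of the mild equation -/

lemma setLIntegral_Ioo_reflect (F : ℝ → ℝ≥0∞) (t : ℝ) :
    ∫⁻ s in Ioo 0 t, F (t - s) = ∫⁻ s in Ioo 0 t, F s := by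
  rw [← lintegral_indicator measurableSet_Ioo, ← lintegral_indicator measurableSet_Ioo,
    ← lintegral_sub_left_eq_self _ t]
  congr 1
  funext s
  by_cases hs : s ∈ Ioo 0 t
  · have h : t - s ∈ Ioo 0 t := ⟨by linarith [hs.2], by linarith [hs.1]⟩
    simp only [indicator_of_mem hs, indicator_of_mem h, sub_sub_cancel]
  · have h : t - s ∉ Ioo 0 t := fun h => hs ⟨by linarith [h.2], by linarith [h.1]⟩
    rw [indicator_of_notMem hs, indicator_of_notMem h]

/-- The heat semigroup acting on `[0, ∞]`-valued functions. -/
noncomputable def heatSg (d : ℕ) (t : ℝ) (f : EuclideanSpace ℝ (Fin d) → ℝ≥0∞)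
    (x : EuclideanSpace ℝ (Fin d)) : ℝ≥0∞ :=
  ∫⁻ y, hk d t x y * f y

lemma measurable_heatSg (d : ℕ) {f : EuclideanSpace ℝ (Fin d) → ℝ≥0∞} (hf : Measurable f) :
    Measurable fun p : ℝ × EuclideanSpace ℝ (Fin d) => heatSg d p.1 f p.2 := by
  unfold heatSg
  refine Measurable.lintegral_prod_right' (f := fun q : (ℝ × EuclideanSpace ℝ (Fin d)) ×
    EuclideanSpace ℝ (Fin d) => hk d q.1.1 q.1.2 q.2 * f q.2) ?_
  exact (measurable_hk d (by fun_prop) (by fun_prop) (by fun_prop)).mul (by fun_prop)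

lemma heatSg_const (d : ℕ) {t : ℝ} (ht : 0 < t) (c : ℝ≥0∞) (x : EuclideanSpace ℝ (Fin d)) :
    heatSg d t (fun _ => c) x = c := by
  unfold heatSg
  rw [lintegral_mul_const _ (measurable_hk d measurable_const measurable_const measurable_id'),
    lintegral_hk d ht, one_mul]

lemma heatSg_mono (d : ℕ) (t : ℝ) {f g : EuclideanSpace ℝ (Fin d) → ℝ≥0∞} (h : ∀ x, f x ≤ g x)
    (x : EuclideanSpace ℝ (Fin d)) : heatSg d t f x ≤ heatSg d t g x :=
  lintegral_mono fun y => by gcongr; exact h y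

lemma heatSg_le_const (d : ℕ) {t : ℝ} (ht : 0 < t) {f : EuclideanSpace ℝ (Fin d) → ℝ≥0∞}
    {c : ℝ≥0∞} (h : ∀ x, f x ≤ c) (x : EuclideanSpace ℝ (Fin d)) : heatSg d t f x ≤ c :=
  (heatSg_mono d t h x).trans (heatSg_const d ht c x).le

/-- The mild equation for `[0, ∞]`-valued functions, with the time variable of the Duhamel term
reversed. -/
structure IsMildE (d : ℕ) (φ : EuclideanSpace ℝ (Fin d) → ℝ≥0∞)
    (U : ℝ → EuclideanSpace ℝ (Fin d) → ℝ≥0∞) : Prop where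
  meas : Measurable (Function.uncurry U)
  meas_data : Measurable φ
  eq : ∀ t x, 0 < t → U t x + ∫⁻ s in Ioo 0 t, heatSg d (t - s) (fun y => U s y ^ 2) x =
    heatSg d t φ x

lemma IsMildSolution.isMildE {d : ℕ} {φ : EuclideanSpace ℝ (Fin d) → ℝ}
    {u : ℝ → EuclideanSpace ℝ (Fin d) → ℝ} (h : IsMildSolution d φ u) (hφ : Measurable φ) :
    IsMildE d (fun x => ENNReal.ofReal (φ x)) (fun t x => ENNReal.ofReal (u t x)) where
  meas := ENNReal.measurable_ofReal.comp h.1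
  meas_data := ENNReal.measurable_ofReal.comp hφ
  eq := by
    intro t x ht
    have h1 := h.2.2 t x ht
    have h2 : (∫⁻ y, ENNReal.ofReal (heatKernel d t x y * φ y)) =
        heatSg d t (fun x => ENNReal.ofReal (φ x)) x := by
      refine lintegral_congr fun y => ?_
      rw [ENNReal.ofReal_mul (heatKernel_nonneg d ht x y), hk]
    rw [h2] at h1
    rw [← h1, ← setLIntegral_Ioo_reflect]
    congr 1
    refine setLIntegral_congr_fun measurableSet_Ioo fun s hs => ?_
    simp only [sub_sub_cancel]
    refine lintegral_congr fun y => ?_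
    rw [ENNReal.ofReal_mul (heatKernel_nonneg d hs.1 x y), hk, ENNReal.ofReal_pow (h.2.1 _ _)]

section

variable {d : ℕ} {φ : EuclideanSpace ℝ (Fin d) → ℝ≥0∞}
  {U : ℝ → EuclideanSpace ℝ (Fin d) → ℝ≥0∞}

/-- The heat semigroup is symmetric with respect to Lebesgue measure. -/
lemma lintegral_mul_heatSg (t : ℝ) {f g : EuclideanSpace ℝ (Fin d) → ℝ≥0∞}
    (hf : Measurable f) (hg : Measurable g) :
    ∫⁻ x, heatSg d t f x * g x = ∫⁻ x, f x * heatSg d t g x := by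
  have hm : Measurable fun p : EuclideanSpace ℝ (Fin d) × EuclideanSpace ℝ (Fin d) =>
      hk d t p.1 p.2 := measurable_hk d (by fun_prop) (by fun_prop) (by fun_prop)
  calc ∫⁻ x, heatSg d t f x * g x = ∫⁻ x, ∫⁻ y, hk d t x y * f y * g x := by
        refine lintegral_congr fun x => ?_
        rw [heatSg, lintegral_mul_const]
        exact (hm.comp measurable_prodMk_left).mul hf
    _ = ∫⁻ y, ∫⁻ x, hk d t x y * f y * g x := by
        apply lintegral_lintegral_swap
        exact ((hm.mul (hf.comp measurable_snd)).mul (hg.comp measurable_fst)).aemeasurable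
    _ = _ := by
        refine lintegral_congr fun y => ?_
        rw [heatSg, ← lintegral_const_mul]
        · refine lintegral_congr fun x => ?_
          rw [hk_symm]; ring
        · exact (hm.comp measurable_prodMk_left).mul hg

lemma IsMildE.measurable_slice (h : IsMildE d φ U) (t : ℝ) : Measurable (U t) :=
  h.meas.comp measurable_prodMk_left

/-- The mild equation tested against a nonnegative function. -/
lemma IsMildE.dual (h : IsMildE d φ U) {f : EuclideanSpace ℝ (Fin d) → ℝ≥0∞}
    (hf : Measurable f) {t : ℝ} (ht : 0 < t) :
    (∫⁻ x, U t x * f x) + ∫⁻ s in Ioo 0 t, ∫⁻ x, U s x ^ 2 * heatSg d (t - s) f x =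
      ∫⁻ x, φ x * heatSg d t f x := by
  rw [← lintegral_mul_heatSg t h.meas_data hf]
  have e0 : ∫⁻ x, heatSg d t φ x * f x = ∫⁻ x, (U t x * f x +
      (∫⁻ s in Ioo 0 t, heatSg d (t - s) (fun y => U s y ^ 2) x) * f x) :=
    lintegral_congr fun x => by rw [← h.eq t x ht, add_mul]
  rw [e0, lintegral_add_left (f := fun x => U t x * f x) ((h.measurable_slice t).mul hf)]
  congr 1
  have hm : Measurable fun p : ℝ × EuclideanSpace ℝ (Fin d) =>
      heatSg d (t - p.1) (fun y => U p.1 y ^ 2) p.2 := by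
    unfold heatSg
    refine Measurable.lintegral_prod_right' (f := fun q : (ℝ × EuclideanSpace ℝ (Fin d)) ×
      EuclideanSpace ℝ (Fin d) => hk d (t - q.1.1) q.1.2 q.2 * U q.1.1 q.2 ^ 2) ?_
    refine (measurable_hk d (by fun_prop) (by fun_prop) (by fun_prop)).mul (Measurable.pow_const ?_ 2)
    exact h.meas.comp (f := fun q : (ℝ × EuclideanSpace ℝ (Fin d)) ×
      EuclideanSpace ℝ (Fin d) => (q.1.1, q.2)) (by fun_prop)
  have e1 : ∫⁻ s in Ioo 0 t, ∫⁻ x, U s x ^ 2 * heatSg d (t - s) f x =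
      ∫⁻ s in Ioo 0 t, ∫⁻ x, heatSg d (t - s) (fun y => U s y ^ 2) x * f x :=
    lintegral_congr fun s => by
      have h5 : Measurable fun y => U s y ^ 2 := (h.measurable_slice s).pow_const 2
      rw [lintegral_mul_heatSg (t - s) h5 hf]
  have e2 : Measurable (Function.uncurry fun (s : ℝ) (x : EuclideanSpace ℝ (Fin d)) =>
      heatSg d (t - s) (fun y => U s y ^ 2) x * f x) := by
    have h5 : Measurable fun p : ℝ × EuclideanSpace ℝ (Fin d) => f p.2 := hf.comp measurable_snd
    exact Measurable.mul hm h5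
  have e3 : ∀ x, ∫⁻ s in Ioo 0 t, heatSg d (t - s) (fun y => U s y ^ 2) x * f x =
      (∫⁻ s in Ioo 0 t, heatSg d (t - s) (fun y => U s y ^ 2) x) * f x := by
    intro x
    have h4 : Measurable fun s : ℝ => heatSg d (t - s) (fun y => U s y ^ 2) x :=
      by
        have h5 := hm.comp (measurable_prodMk_right (y := x))
        exact h5
    rw [lintegral_mul_const (f x) h4]
  rw [e1, lintegral_lintegral_swap e2.aemeasurable]
  exact lintegral_congr e3

lemma IsMildE.le (h : IsMildE d φ U) {n : ℝ≥0∞} (hn : ∀ x, φ x ≤ n) {t : ℝ} (ht : 0 < t)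
    (x : EuclideanSpace ℝ (Fin d)) : U t x ≤ n :=
  calc U t x ≤ _ := le_self_add
    _ = heatSg d t φ x := h.eq t x ht
    _ ≤ n := heatSg_le_const d ht hn x

lemma heatSg_hk {s t : ℝ} (hs : 0 < s) (ht : 0 < t) (x y : EuclideanSpace ℝ (Fin d)) :
    heatSg d s (hk d t x) y = hk d (t + s) x y := by
  rw [add_comm, hk_symm, ← lintegral_hk_mul_hk d hs ht]
  unfold heatSg
  simp_rw [hk_symm d t x]

/-- The mild equation along the backward heat flow `t ↦ P_{T-t} U(t)`. -/
lemma IsMildE.flow (h : IsMildE d φ U) {t T : ℝ} (ht : 0 < t) (htT : t < T)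
    (x : EuclideanSpace ℝ (Fin d)) :
    heatSg d (T - t) (U t) x + ∫⁻ s in Ioo 0 t, heatSg d (T - s) (fun y => U s y ^ 2) x =
      heatSg d T φ x := by
  have hm : Measurable (hk d (T - t) x) :=
    measurable_hk d measurable_const measurable_const measurable_id'
  have h1 := h.dual hm ht
  have e1 : ∫⁻ y, U t y * hk d (T - t) x y = heatSg d (T - t) (U t) x := by
    simp_rw [heatSg, mul_comm]
  have e2 : ∫⁻ y, φ y * heatSg d t (hk d (T - t) x) y = heatSg d T φ x := by
    simp_rw [heatSg_hk ht (sub_pos.2 htT), heatSg, mul_comm, sub_add_cancel]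
  rw [e1, e2] at h1
  rw [← h1]
  congr 1
  refine setLIntegral_congr_fun measurableSet_Ioo fun s hs => ?_
  refine lintegral_congr fun y => ?_
  rw [heatSg_hk (sub_pos.2 hs.2) (sub_pos.2 htT), mul_comm]
  congr 2
  ring

end

/-! ### Bounded mild solutions and the comparison principle -/

lemma setLIntegral_Ioo_ofReal {q : ℝ → ℝ} {F : ℝ → ℝ≥0∞} {t : ℝ} (ht : 0 ≤ t)
    (hq : IntervalIntegrable q volume 0 t) (h0 : ∀ s ∈ Ioo 0 t, 0 ≤ q s)
    (hF : ∀ s ∈ Ioo 0 t, F s = ENNReal.ofReal (q s)) :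
    ∫⁻ s in Ioo 0 t, F s = ENNReal.ofReal (∫ s in (0 : ℝ)..t, q s) := by
  rw [intervalIntegral.integral_of_le ht, integral_Ioc_eq_integral_Ioo,
    ofReal_integral_eq_lintegral_ofReal]
  · exact setLIntegral_congr_fun measurableSet_Ioo hF
  · exact ((intervalIntegrable_iff_integrableOn_Ioo_of_le ht).1 hq)
  · exact (ae_restrict_mem measurableSet_Ioo).mono h0

lemma intervalIntegrable_of_bdd {q : ℝ → ℝ} {t M : ℝ} (ht : 0 ≤ t) (hq : Measurable q)
    (hb : ∀ s ∈ Ioo 0 t, |q s| ≤ M) : IntervalIntegrable q volume 0 t := by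
  rw [intervalIntegrable_iff_integrableOn_Ioo_of_le ht]
  refine Integrable.of_bound (C := M) hq.aestronglyMeasurable ?_
  exact (ae_restrict_mem measurableSet_Ioo).mono hb

lemma integrable_heatKernel_mul {d : ℕ} {t : ℝ} (ht : 0 < t) (x : EuclideanSpace ℝ (Fin d))
    {f : EuclideanSpace ℝ (Fin d) → ℝ} (hf : Measurable f) {M : ℝ} (hM : ∀ y, |f y| ≤ M) :
    Integrable fun y => heatKernel d t x y * f y :=
  (integrable_heatKernel d ht x).mul_bdd hf.aestronglyMeasurable (ae_of_all _ hM)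

lemma heatSg_ofReal {d : ℕ} {t : ℝ} (ht : 0 < t) (x : EuclideanSpace ℝ (Fin d))
    {f : EuclideanSpace ℝ (Fin d) → ℝ} (hf : Measurable f) {M : ℝ} (h0 : ∀ y, 0 ≤ f y)
    (hM : ∀ y, f y ≤ M) : heatSg d t (fun y => ENNReal.ofReal (f y)) x =
      ENNReal.ofReal (∫ y, heatKernel d t x y * f y) := by
  rw [ofReal_integral_eq_lintegral_ofReal]
  · refine lintegral_congr fun y => ?_
    rw [hk, ENNReal.ofReal_mul (heatKernel_nonneg d ht x y)]
  · exact integrable_heatKernel_mul ht x hf fun y => by rw [abs_of_nonneg (h0 y)]; exact hM y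
  · exact ae_of_all _ fun y => mul_nonneg (heatKernel_nonneg d ht x y) (h0 y)

/-- A mild solution with measurable data taking values in `[0, N]`. -/
structure BddMild (d : ℕ) (N : ℝ) (φ : EuclideanSpace ℝ (Fin d) → ℝ)
    (u : ℝ → EuclideanSpace ℝ (Fin d) → ℝ) : Prop where
  sol : IsMildSolution d φ u
  meas_data : Measurable φ
  data_nonneg : ∀ x, 0 ≤ φ x
  data_le : ∀ x, φ x ≤ N

namespace BddMild

variable {d : ℕ} {N : ℝ} {φ : EuclideanSpace ℝ (Fin d) → ℝ}
  {u : ℝ → EuclideanSpace ℝ (Fin d) → ℝ}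

lemma N_nonneg (h : BddMild d N φ u) : 0 ≤ N := (h.data_nonneg 0).trans (h.data_le 0)

lemma isMildE (h : BddMild d N φ u) :
    IsMildE d (fun x => ENNReal.ofReal (φ x)) (fun t x => ENNReal.ofReal (u t x)) :=
  h.sol.isMildE h.meas_data

lemma nonneg (h : BddMild d N φ u) (t : ℝ) (x : EuclideanSpace ℝ (Fin d)) : 0 ≤ u t x :=
  h.sol.2.1 t x

lemma le (h : BddMild d N φ u) {t : ℝ} (ht : 0 < t) (x : EuclideanSpace ℝ (Fin d)) :
    u t x ≤ N := by
  have := h.isMildE.le (n := ENNReal.ofReal N)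
    (fun x => ENNReal.ofReal_le_ofReal (h.data_le x)) ht x
  exact (ENNReal.ofReal_le_ofReal_iff h.N_nonneg).1 this

lemma meas (h : BddMild d N φ u) (t : ℝ) : Measurable (u t) :=
  h.sol.1.comp measurable_prodMk_left

lemma sq_le (h : BddMild d N φ u) {t : ℝ} (ht : 0 < t) (x : EuclideanSpace ℝ (Fin d)) :
    u t x ^ 2 ≤ N ^ 2 := pow_le_pow_left₀ (h.nonneg t x) (h.le ht x) 2

lemma measurable_flow (h : BddMild d N φ u) (T : ℝ) (x : EuclideanSpace ℝ (Fin d)) :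
    Measurable fun s => ∫ y, heatKernel d (T - s) x y * u s y ^ 2 := by
  refine StronglyMeasurable.measurable ?_
  refine StronglyMeasurable.integral_prod_right'
    (f := fun p : ℝ × EuclideanSpace ℝ (Fin d) => heatKernel d (T - p.1) x p.2 * u p.1 p.2 ^ 2) ?_
  have h1 : Measurable fun p : ℝ × EuclideanSpace ℝ (Fin d) => u p.1 p.2 := h.sol.1
  have h2 : Measurable fun p : ℝ × EuclideanSpace ℝ (Fin d) => heatKernel d (T - p.1) x p.2 := by
    exact (measurable_heatKernel d).comp (f := fun p : ℝ × EuclideanSpace ℝ (Fin d) =>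
      (T - p.1, x, p.2)) (by fun_prop)
  exact (h2.mul (h1.pow_const 2)).stronglyMeasurable

lemma flow_nonneg (_h : BddMild d N φ u) {s T : ℝ} (hs : s < T) (x : EuclideanSpace ℝ (Fin d)) :
    0 ≤ ∫ y, heatKernel d (T - s) x y * u s y ^ 2 :=
  integral_nonneg fun y => mul_nonneg (heatKernel_nonneg d (sub_pos.2 hs) x y) (sq_nonneg _)

lemma flow_le (h : BddMild d N φ u) {s T : ℝ} (h0 : 0 < s) (hs : s < T)
    (x : EuclideanSpace ℝ (Fin d)) :
    ∫ y, heatKernel d (T - s) x y * u s y ^ 2 ≤ N ^ 2 := by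
  have hT := sub_pos.2 hs
  calc _ ≤ ∫ y, heatKernel d (T - s) x y * N ^ 2 := by
        refine integral_mono (integrable_heatKernel_mul hT x ((h.meas s).pow_const 2) (M := N ^ 2)
          fun y => ?_) ((integrable_heatKernel d hT x).mul_const _) fun y => ?_
        · rw [abs_of_nonneg (sq_nonneg _)]; exact h.sq_le h0 y
        · exact mul_le_mul_of_nonneg_left (h.sq_le h0 y) (heatKernel_nonneg d hT x y)
    _ = N ^ 2 := by rw [integral_mul_const, integral_heatKernel d hT, one_mul]

lemma intervalIntegrable_flow (h : BddMild d N φ u) {t T : ℝ} (ht : 0 ≤ t) (htT : t ≤ T)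
    (x : EuclideanSpace ℝ (Fin d)) :
    IntervalIntegrable (fun s => ∫ y, heatKernel d (T - s) x y * u s y ^ 2) volume 0 t := by
  refine intervalIntegrable_of_bdd (M := N ^ 2) ht (h.measurable_flow T x) fun s hs => ?_
  have hsT := hs.2.trans_le htT
  rw [abs_of_nonneg (h.flow_nonneg hsT x)]
  exact h.flow_le hs.1 hsT x

lemma lintegral_flow (h : BddMild d N φ u) {t T : ℝ} (ht : 0 ≤ t) (htT : t ≤ T)
    (x : EuclideanSpace ℝ (Fin d)) :
    ∫⁻ s in Ioo 0 t, heatSg d (T - s) (fun y => ENNReal.ofReal (u s y) ^ 2) x =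
      ENNReal.ofReal (∫ s in (0 : ℝ)..t, ∫ y, heatKernel d (T - s) x y * u s y ^ 2) := by
  refine setLIntegral_Ioo_ofReal ht (h.intervalIntegrable_flow ht htT x)
    (fun s hs => h.flow_nonneg (hs.2.trans_le htT) x) fun s hs => ?_
  rw [← heatSg_ofReal (sub_pos.2 (hs.2.trans_le htT)) x ((h.meas s).pow_const 2)
    (fun y => sq_nonneg _) (h.sq_le hs.1)]
  simp_rw [ENNReal.ofReal_pow (h.nonneg _ _)]

lemma integral_flow_nonneg (h : BddMild d N φ u) {t T : ℝ} (ht : 0 ≤ t) (htT : t ≤ T)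
    (x : EuclideanSpace ℝ (Fin d)) :
    0 ≤ ∫ s in (0 : ℝ)..t, ∫ y, heatKernel d (T - s) x y * u s y ^ 2 := by
  rw [intervalIntegral.integral_of_le ht, integral_Ioc_eq_integral_Ioo]
  exact setIntegral_nonneg measurableSet_Ioo fun s hs => h.flow_nonneg (hs.2.trans_le htT) x

lemma eq_real (h : BddMild d N φ u) {T : ℝ} (hT : 0 < T) (x : EuclideanSpace ℝ (Fin d)) :
    u T x + ∫ s in (0 : ℝ)..T, ∫ y, heatKernel d (T - s) x y * u s y ^ 2 =
      ∫ y, heatKernel d T x y * φ y := by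
  have h1 := h.isMildE.eq T x hT
  rw [h.lintegral_flow hT.le le_rfl x, heatSg_ofReal hT x h.meas_data h.data_nonneg h.data_le,
    ← ENNReal.ofReal_add (h.nonneg T x) (h.integral_flow_nonneg hT.le le_rfl x)] at h1
  refine (ENNReal.ofReal_eq_ofReal_iff (add_nonneg (h.nonneg T x)
    (h.integral_flow_nonneg hT.le le_rfl x)) (integral_nonneg fun y => ?_)).1 h1
  exact mul_nonneg (heatKernel_nonneg d hT x y) (h.data_nonneg y)

lemma flow_real (h : BddMild d N φ u) {t T : ℝ} (ht : 0 < t) (htT : t < T)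
    (x : EuclideanSpace ℝ (Fin d)) :
    (∫ y, heatKernel d (T - t) x y * u t y) +
      ∫ s in (0 : ℝ)..t, ∫ y, heatKernel d (T - s) x y * u s y ^ 2 =
      ∫ y, heatKernel d T x y * φ y := by
  have hT := ht.trans htT
  have h1 := h.isMildE.flow ht htT x
  have h2 : 0 ≤ ∫ y, heatKernel d (T - t) x y * u t y := integral_nonneg fun y =>
    mul_nonneg (heatKernel_nonneg d (sub_pos.2 htT) x y) (h.nonneg t y)
  have h3 := h.integral_flow_nonneg ht.le htT.le x
  rw [h.lintegral_flow ht.le htT.le x, heatSg_ofReal hT x h.meas_data h.data_nonneg h.data_le,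
    heatSg_ofReal (sub_pos.2 htT) x (h.meas t) (h.nonneg t) (h.le ht),
    ← ENNReal.ofReal_add h2 h3] at h1
  refine (ENNReal.ofReal_eq_ofReal_iff (add_nonneg h2 h3) (integral_nonneg fun y => ?_)).1 h1
  exact mul_nonneg (heatKernel_nonneg d hT x y) (h.data_nonneg y)

/-- One step of the contraction behind the comparison principle: if `u₂ - u₁ ≥ -K` up to time
`T₀`, then the lower bound improves to `-K (1 - exp(-2NT))`. -/
lemma compare_step {φ₁ φ₂ : EuclideanSpace ℝ (Fin d) → ℝ}
    {u₁ u₂ : ℝ → EuclideanSpace ℝ (Fin d) → ℝ} (h₁ : BddMild d N φ₁ u₁) (h₂ : BddMild d N φ₂ u₂)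
    (hφ : ∀ x, φ₁ x ≤ φ₂ x) {T₀ K : ℝ} (hK : 0 ≤ K)
    (hle : ∀ t x, 0 < t → t ≤ T₀ → u₁ t x - u₂ t x ≤ K) {T : ℝ} (hT : 0 < T) (hTT : T ≤ T₀)
    (x : EuclideanSpace ℝ (Fin d)) :
    u₁ T x - u₂ T x ≤ K * (1 - Real.exp (-(2 * N * T))) := by
  -- `c + ∫₀ᵗ q = P_{T-t}(u₂(t) - u₁(t))(x)`, which is `≥ -K`; at `t = T` it is `u₂(T,x) - u₁(T,x)`.
  set q : ℝ → ℝ := fun s => (∫ y, heatKernel d (T - s) x y * u₁ s y ^ 2) -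
    ∫ y, heatKernel d (T - s) x y * u₂ s y ^ 2 with hq
  set c : ℝ := (∫ y, heatKernel d T x y * φ₂ y) - ∫ y, heatKernel d T x y * φ₁ y with hc
  have hN := h₁.N_nonneg
  have hqi : ∀ t, 0 ≤ t → t ≤ T → ∫ s in (0 : ℝ)..t, q s =
      (∫ s in (0 : ℝ)..t, ∫ y, heatKernel d (T - s) x y * u₁ s y ^ 2) -
        ∫ s in (0 : ℝ)..t, ∫ y, heatKernel d (T - s) x y * u₂ s y ^ 2 := fun t ht htT =>
    intervalIntegral.integral_sub (h₁.intervalIntegrable_flow ht htT x)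
      (h₂.intervalIntegrable_flow ht htT x)
  have hqI : IntervalIntegrable q volume 0 T :=
    (h₁.intervalIntegrable_flow hT.le le_rfl x).sub (h₂.intervalIntegrable_flow hT.le le_rfl x)
  -- The integrating factor `exp(2Nt)` absorbs `u₁² - u₂² = -(u₁ + u₂)(u₂ - u₁)`, as `u₁ + u₂ ≤ 2N`.
  have hda : ∀ t : ℝ, HasDerivAt (fun t => Real.exp (2 * N * t))
      (2 * N * Real.exp (2 * N * t)) t := fun t => by
    have := ((hasDerivAt_id' t).const_mul (2 * N)).exp
    convert this using 1
    ring
  have hW := weight_mul_primitive c hqI hda (by fun_prop)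
  have hT1 : c + ∫ s in (0 : ℝ)..T, q s = u₂ T x - u₁ T x := by
    rw [hqi T hT.le le_rfl]
    linarith [h₁.eq_real hT x, h₂.eq_real hT x]
  have hc0 : 0 ≤ c := by
    rw [hc, sub_nonneg]
    refine integral_mono (integrable_heatKernel_mul hT x h₁.meas_data (M := N) fun y => ?_)
      (integrable_heatKernel_mul hT x h₂.meas_data (M := N) fun y => ?_) fun y =>
        mul_le_mul_of_nonneg_left (hφ y) (heatKernel_nonneg d hT x y)
    · rw [abs_of_nonneg (h₁.data_nonneg y)]; exact h₁.data_le y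
    · rw [abs_of_nonneg (h₂.data_nonneg y)]; exact h₂.data_le y
  have key : ∀ t ∈ Ioo 0 T, -K * (2 * N * Real.exp (2 * N * t)) ≤
      2 * N * Real.exp (2 * N * t) * (c + ∫ s in (0 : ℝ)..t, q s) +
        Real.exp (2 * N * t) * q t := by
    intro t ht
    have hg : c + ∫ s in (0 : ℝ)..t, q s = (∫ y, heatKernel d (T - t) x y * u₂ t y) -
        ∫ y, heatKernel d (T - t) x y * u₁ t y := by
      rw [hqi t ht.1.le ht.2.le]
      linarith [h₁.flow_real ht.1 ht.2 x, h₂.flow_real ht.1 ht.2 x]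
    have hs := sub_pos.2 ht.2
    have i1 : Integrable fun y => heatKernel d (T - t) x y * u₁ t y :=
      integrable_heatKernel_mul hs x (h₁.meas t) (M := N) fun y => by
        rw [abs_of_nonneg (h₁.nonneg t y)]; exact h₁.le ht.1 y
    have i2 : Integrable fun y => heatKernel d (T - t) x y * u₂ t y :=
      integrable_heatKernel_mul hs x (h₂.meas t) (M := N) fun y => by
        rw [abs_of_nonneg (h₂.nonneg t y)]; exact h₂.le ht.1 y
    have j1 : Integrable fun y => heatKernel d (T - t) x y * u₁ t y ^ 2 :=
      integrable_heatKernel_mul hs x ((h₁.meas t).pow_const 2) (M := N ^ 2) fun y => by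
        rw [abs_of_nonneg (sq_nonneg _)]; exact h₁.sq_le ht.1 y
    have j2 : Integrable fun y => heatKernel d (T - t) x y * u₂ t y ^ 2 :=
      integrable_heatKernel_mul hs x ((h₂.meas t).pow_const 2) (M := N ^ 2) fun y => by
        rw [abs_of_nonneg (sq_nonneg _)]; exact h₂.sq_le ht.1 y
    have m1 : Integrable fun y => 2 * N * (heatKernel d (T - t) x y * u₂ t y -
        heatKernel d (T - t) x y * u₁ t y) := (i2.sub i1).const_mul _
    have m2 : Integrable fun y => heatKernel d (T - t) x y * u₁ t y ^ 2 -
        heatKernel d (T - t) x y * u₂ t y ^ 2 := j1.sub j2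
    have main : -(2 * N * K) ≤ 2 * N * (c + ∫ s in (0 : ℝ)..t, q s) + q t := by
      calc -(2 * N * K) = ∫ y, heatKernel d (T - t) x y * (-(2 * N * K)) := by
            rw [integral_mul_const, integral_heatKernel d hs, one_mul]
        _ ≤ ∫ y, (2 * N * (heatKernel d (T - t) x y * u₂ t y - heatKernel d (T - t) x y * u₁ t y)
              + (heatKernel d (T - t) x y * u₁ t y ^ 2 -
                heatKernel d (T - t) x y * u₂ t y ^ 2)) := by
            refine integral_mono ((integrable_heatKernel d hs x).mul_const _)
              (m1.add m2) fun y => ?_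
            have k0 := heatKernel_nonneg d hs x y
            have k1 := h₁.nonneg t y
            have k2 := h₂.nonneg t y
            have k3 := h₁.le ht.1 y
            have k4 := h₂.le ht.1 y
            have k5 := hle t y ht.1 (ht.2.le.trans hTT)
            have : -(2 * N * K) ≤ 2 * N * (u₂ t y - u₁ t y) + (u₁ t y ^ 2 - u₂ t y ^ 2) := by
              have : 0 ≤ (2 * N - u₁ t y - u₂ t y) * (u₂ t y - u₁ t y + K) :=
                mul_nonneg (by linarith) (by linarith)
              nlinarith [mul_nonneg k1 hK, mul_nonneg k2 hK]
            calc _ ≤ heatKernel d (T - t) x y *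
                  (2 * N * (u₂ t y - u₁ t y) + (u₁ t y ^ 2 - u₂ t y ^ 2)) :=
                  mul_le_mul_of_nonneg_left this k0
              _ = _ := by ring
        _ = _ := by
            rw [integral_add m1 m2, integral_const_mul,
              integral_sub i2 i1, integral_sub j1 j2, hg]
    have he := Real.exp_pos (2 * N * t)
    nlinarith [mul_le_mul_of_nonneg_left main he.le]
  have hqint : IntervalIntegrable (fun t => 2 * N * Real.exp (2 * N * t) *
      (c + ∫ s in (0 : ℝ)..t, q s) + Real.exp (2 * N * t) * q t) volume 0 T := by
    refine IntervalIntegrable.add (ContinuousOn.intervalIntegrable ?_)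
      (hqI.continuousOn_mul (by fun_prop))
    refine ContinuousOn.mul (by fun_prop) (continuousOn_const.add ?_)
    exact intervalIntegral.continuousOn_primitive_interval
      (by rw [uIcc_of_le hT.le]; exact (intervalIntegrable_iff_integrableOn_Icc_of_le hT.le).1 hqI)
  have hlow : ∫ t in (0 : ℝ)..T, -K * (2 * N * Real.exp (2 * N * t)) ≤
      ∫ t in (0 : ℝ)..T, (2 * N * Real.exp (2 * N * t) * (c + ∫ s in (0 : ℝ)..t, q s) +
        Real.exp (2 * N * t) * q t) := by
    refine intervalIntegral.integral_mono_on_of_le_Ioo hT.le ?_ hqint key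
    exact Continuous.intervalIntegrable (by fun_prop) _ _
  rw [intervalIntegral.integral_const_mul,
    intervalIntegral.integral_eq_sub_of_hasDerivAt (fun t _ => hda t)
      (Continuous.intervalIntegrable (by fun_prop) _ _)] at hlow
  simp only [mul_zero, Real.exp_zero] at hlow hW
  rw [hT1] at hW
  have he := Real.exp_pos (2 * N * T)
  have h4 : Real.exp (2 * N * T) * (u₁ T x - u₂ T x) ≤ K * (Real.exp (2 * N * T) - 1) := by
    nlinarith
  rw [Real.exp_neg]
  rw [← mul_le_mul_iff_right₀ he]
  calc _ ≤ _ := h4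
    _ = _ := by field_simp

/-- The comparison principle, obtained by iterating `compare_step`. Uniqueness of bounded mild
solutions is the case of equal data. -/
lemma compare {φ₁ φ₂ : EuclideanSpace ℝ (Fin d) → ℝ}
    {u₁ u₂ : ℝ → EuclideanSpace ℝ (Fin d) → ℝ} (h₁ : BddMild d N φ₁ u₁) (h₂ : BddMild d N φ₂ u₂)
    (hφ : ∀ x, φ₁ x ≤ φ₂ x) {T : ℝ} (hT : 0 < T) (x : EuclideanSpace ℝ (Fin d)) :
    u₁ T x ≤ u₂ T x := by
  have hN := h₁.N_nonneg
  set θ : ℝ := 1 - Real.exp (-(2 * N * T)) with hθ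
  have hθ0 : 0 ≤ θ := by
    rw [hθ, sub_nonneg, Real.exp_le_one_iff]
    have := mul_nonneg hN hT.le
    linarith
  have hθ1 : θ < 1 := by
    have := Real.exp_pos (-(2 * N * T))
    linarith
  have hind : ∀ k : ℕ, ∀ t y, 0 < t → t ≤ T → u₁ t y - u₂ t y ≤ N * θ ^ k := by
    intro k
    induction k with
    | zero =>
      intro t y ht _
      have := h₁.le ht y
      have := h₂.nonneg t y
      simp; linarith
    | succ k ih =>
      intro t y ht htT
      have hK : 0 ≤ N * θ ^ k := by positivity
      refine (compare_step h₁ h₂ hφ hK ih ht htT y).trans ?_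
      rw [pow_succ, ← mul_assoc]
      refine mul_le_mul_of_nonneg_left ?_ hK
      rw [hθ]
      gcongr
  have hlim : Tendsto (fun k : ℕ => N * θ ^ k) atTop (nhds 0) := by
    simpa using (tendsto_pow_atTop_nhds_zero_of_lt_one hθ0 hθ1).const_mul N
  have := ge_of_tendsto' hlim fun k => hind k T x hT le_rfl
  linarith

end BddMild

/-! ### The spatially constant solution and the weak equation -/

/-- The spatially constant solution; `|t|` in place of `t` only makes it nonnegative for all
`t : ℝ`, as `IsMildSolution` demands. -/
lemma bddMild_ode (d : ℕ) {N : ℝ} (hN : 0 ≤ N) :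
    BddMild d N (fun _ => N) (fun t _ => N / (1 + N * |t|)) where
  meas_data := measurable_const
  data_nonneg _ := hN
  data_le _ := le_rfl
  sol := by
    refine ⟨?_, fun t x => by positivity, fun t x ht => ?_⟩
    · unfold Function.uncurry
      fun_prop
    have e1 : ∀ s, 0 < s → ∀ c : ℝ, 0 ≤ c →
        ∫⁻ y, ENNReal.ofReal (heatKernel d s x y * c) = ENNReal.ofReal c := by
      intro s hs c hc
      have := heatSg_const d hs (ENNReal.ofReal c) x
      rw [← this]
      refine lintegral_congr fun y => ?_
      rw [hk, ENNReal.ofReal_mul (heatKernel_nonneg d hs x y)]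
    rw [e1 t ht N hN]
    have e2 : ∫⁻ s in Ioo 0 t, ∫⁻ y, ENNReal.ofReal
        (heatKernel d s x y * (N / (1 + N * |t - s|)) ^ 2) =
        ENNReal.ofReal (∫ s in (0 : ℝ)..t, (N / (1 + N * |t - s|)) ^ 2) := by
      have hc : Continuous fun s : ℝ => (N / (1 + N * |t - s|)) ^ 2 := by
        refine Continuous.pow (Continuous.div continuous_const (by fun_prop) fun s => ?_) 2
        positivity
      refine setLIntegral_Ioo_ofReal ht.le (hc.intervalIntegrable _ _) (fun s _ => sq_nonneg _)
        fun s hs => e1 s hs.1 _ (sq_nonneg _)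
    have hpos : ∀ s ∈ uIcc 0 t, 0 < 1 + N * (t - s) := by
      intro s hs
      rw [uIcc_of_le ht.le] at hs
      have := mul_nonneg hN (sub_nonneg.2 hs.2)
      linarith
    have e3 : ∫ s in (0 : ℝ)..t, (N / (1 + N * |t - s|)) ^ 2 = N - N / (1 + N * |t|) := by
      have e4 : ∫ s in (0 : ℝ)..t, (N / (1 + N * |t - s|)) ^ 2 =
          ∫ s in (0 : ℝ)..t, (N / (1 + N * (t - s))) ^ 2 := by
        refine intervalIntegral.integral_congr fun s hs => ?_
        rw [uIcc_of_le ht.le] at hs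
        simp only [abs_of_nonneg (sub_nonneg.2 hs.2)]
      rw [e4, intervalIntegral.integral_eq_sub_of_hasDerivAt
        (f := fun s => N / (1 + N * (t - s)))]
      · simp [abs_of_pos ht]
      · intro s hs
        have h1 : HasDerivAt (fun s => 1 + N * (t - s)) (N * (-1)) s :=
          (((hasDerivAt_id' s).const_sub t).const_mul N).const_add 1
        have h2 := (hasDerivAt_const s N).div h1 (hpos s hs).ne'
        refine h2.congr_deriv ?_
        rw [div_pow]
        congr 1
        ring
      · apply ContinuousOn.intervalIntegrable
        refine ContinuousOn.pow (ContinuousOn.div continuousOn_const (by fun_prop) fun s hs => ?_) 2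
        exact (hpos s hs).ne'
    rw [e2, e3, ← ENNReal.ofReal_add (by positivity), add_sub_cancel]
    rw [sub_nonneg]
    refine div_le_self hN ?_
    have : 0 ≤ N * |t| := by positivity
    linarith

/-- Comparison with the constant data `N`; this is what makes `u(1) ≤ 1` uniformly in `N`. -/
lemma BddMild.le_ode {d : ℕ} {N : ℝ} {φ : EuclideanSpace ℝ (Fin d) → ℝ}
    {u : ℝ → EuclideanSpace ℝ (Fin d) → ℝ} (h : BddMild d N φ u) {t : ℝ} (ht : 0 < t)
    (x : EuclideanSpace ℝ (Fin d)) : u t x ≤ N / (1 + N * t) := by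
  have := h.compare (bddMild_ode d h.N_nonneg) h.data_le ht x
  rwa [abs_of_pos ht] at this

lemma setLIntegral_Ioo_shift (F : ℝ → ℝ≥0∞) (s t : ℝ) :
    ∫⁻ τ in Ioo s t, F (τ - s) = ∫⁻ σ in Ioo 0 (t - s), F σ := by
  rw [← lintegral_indicator measurableSet_Ioo, ← lintegral_indicator measurableSet_Ioo,
    ← lintegral_sub_right_eq_self ((Ioo 0 (t - s)).indicator F) s]
  congr 1
  funext τ
  by_cases hs : τ ∈ Ioo s t
  · have h : τ - s ∈ Ioo 0 (t - s) := ⟨by linarith [hs.1], by linarith [hs.2]⟩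
    simp only [indicator_of_mem hs, indicator_of_mem h]
  · have h : τ - s ∉ Ioo 0 (t - s) := fun h => hs ⟨by linarith [h.1], by linarith [h.2]⟩
    rw [indicator_of_notMem hs, indicator_of_notMem h]

/-- Tonelli's theorem on the triangle `0 < s < τ < t`. -/
lemma setLIntegral_triangle {G : ℝ → ℝ → ℝ≥0∞} (hG : Measurable (Function.uncurry G)) (t : ℝ) :
    ∫⁻ τ in Ioo 0 t, ∫⁻ s in Ioo 0 τ, G s τ = ∫⁻ s in Ioo 0 t, ∫⁻ τ in Ioo s t, G s τ := by
  have hS : MeasurableSet {p : ℝ × ℝ | 0 < p.1 ∧ p.1 < p.2 ∧ p.2 < t} := by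
    measurability
  have e1 : ∫⁻ τ in Ioo 0 t, ∫⁻ s in Ioo 0 τ, G s τ =
      ∫⁻ τ, ∫⁻ s, {p : ℝ × ℝ | 0 < p.1 ∧ p.1 < p.2 ∧ p.2 < t}.indicator
        (Function.uncurry G) (s, τ) := by
    rw [← lintegral_indicator measurableSet_Ioo]
    refine lintegral_congr fun τ => ?_
    by_cases hτ : τ ∈ Ioo 0 t
    · rw [indicator_of_mem hτ, ← lintegral_indicator measurableSet_Ioo]
      refine lintegral_congr fun s => ?_
      simp only [indicator, mem_Ioo, mem_ofPred_eq, hτ.2, and_true, Function.uncurry]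
    · rw [indicator_of_notMem hτ, eq_comm]
      refine (lintegral_congr fun s => ?_).trans lintegral_zero
      refine indicator_of_notMem (fun h => hτ ?_) _
      exact ⟨h.1.trans h.2.1, h.2.2⟩
  have e2 : ∫⁻ s in Ioo 0 t, ∫⁻ τ in Ioo s t, G s τ =
      ∫⁻ s, ∫⁻ τ, {p : ℝ × ℝ | 0 < p.1 ∧ p.1 < p.2 ∧ p.2 < t}.indicator
        (Function.uncurry G) (s, τ) := by
    rw [← lintegral_indicator measurableSet_Ioo]
    refine lintegral_congr fun s => ?_
    by_cases hs : s ∈ Ioo 0 t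
    · rw [indicator_of_mem hs, ← lintegral_indicator measurableSet_Ioo]
      refine lintegral_congr fun τ => ?_
      simp only [indicator, mem_Ioo, mem_ofPred_eq, hs.1, true_and, Function.uncurry]
    · rw [indicator_of_notMem hs, eq_comm]
      refine (lintegral_congr fun τ => ?_).trans lintegral_zero
      refine indicator_of_notMem (fun h => hs ?_) _
      exact ⟨h.1, h.2.1.trans h.2.2⟩
  rw [e1, e2]
  exact lintegral_lintegral_swap ((hG.indicator hS).comp measurable_swap).aemeasurable

namespace IsMildE

variable {d : ℕ} {φ : EuclideanSpace ℝ (Fin d) → ℝ≥0∞}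
  {U : ℝ → EuclideanSpace ℝ (Fin d) → ℝ≥0∞}

lemma mass (h : IsMildE d φ U) {t : ℝ} (ht : 0 < t) :
    (∫⁻ x, U t x) + ∫⁻ s in Ioo 0 t, ∫⁻ x, U s x ^ 2 = ∫⁻ x, φ x := by
  have h1 := h.dual (f := fun _ => 1) measurable_const ht
  simp only [mul_one, heatSg_const d ht] at h1
  rw [← h1]
  congr 1
  refine setLIntegral_congr_fun measurableSet_Ioo fun s hs => ?_
  simp only [heatSg_const d (sub_pos.2 hs.2), mul_one]

/-- The mild equation tested against `∫₀ᵗ P_τ L dτ`. -/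
lemma dual_integrated (h : IsMildE d φ U) {L : EuclideanSpace ℝ (Fin d) → ℝ≥0∞}
    (hL : Measurable L) (t : ℝ) :
    ∫⁻ x, φ x * ∫⁻ τ in Ioo 0 t, heatSg d τ L x =
      (∫⁻ τ in Ioo 0 t, ∫⁻ x, U τ x * L x) +
        ∫⁻ s in Ioo 0 t, ∫⁻ x, U s x ^ 2 * ∫⁻ σ in Ioo 0 (t - s), heatSg d σ L x := by
  have hP := measurable_heatSg d hL
  have hPx : ∀ x, Measurable fun τ => heatSg d τ L x := fun x => by
    have := hP.comp (measurable_prodMk_right (y := x))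
    exact this
  have hU1 : Measurable fun p : ℝ × EuclideanSpace ℝ (Fin d) => U p.1 p.2 * L p.2 := by
    have h1 : Measurable fun p : ℝ × EuclideanSpace ℝ (Fin d) => L p.2 := hL.comp measurable_snd
    exact Measurable.mul h.meas h1
  have hUm : Measurable fun τ => ∫⁻ x, U τ x * L x := Measurable.lintegral_prod_right' hU1
  have hG : Measurable (Function.uncurry fun s τ : ℝ => ∫⁻ x, U s x ^ 2 * heatSg d (τ - s) L x) := by
    refine Measurable.lintegral_prod_right' (f := fun q : (ℝ × ℝ) × EuclideanSpace ℝ (Fin d) =>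
      U q.1.1 q.2 ^ 2 * heatSg d (q.1.2 - q.1.1) L q.2) ?_
    have h1 : Measurable fun q : (ℝ × ℝ) × EuclideanSpace ℝ (Fin d) => U q.1.1 q.2 :=
      h.meas.comp (f := fun q : (ℝ × ℝ) × EuclideanSpace ℝ (Fin d) => (q.1.1, q.2)) (by fun_prop)
    have h2 : Measurable fun q : (ℝ × ℝ) × EuclideanSpace ℝ (Fin d) =>
        heatSg d (q.1.2 - q.1.1) L q.2 := by
      have := hP.comp (f := fun q : (ℝ × ℝ) × EuclideanSpace ℝ (Fin d) =>
        (q.1.2 - q.1.1, q.2)) (by fun_prop)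
      exact this
    exact (h1.pow_const 2).mul h2
  have e1 : ∫⁻ x, φ x * ∫⁻ τ in Ioo 0 t, heatSg d τ L x =
      ∫⁻ τ in Ioo 0 t, ∫⁻ x, φ x * heatSg d τ L x := by
    have e : ∀ x, φ x * ∫⁻ τ in Ioo 0 t, heatSg d τ L x =
        ∫⁻ τ in Ioo 0 t, φ x * heatSg d τ L x := fun x =>
      (lintegral_const_mul (φ x) (hPx x)).symm
    simp_rw [e]
    refine lintegral_lintegral_swap (Measurable.aemeasurable ?_)
    have h1 : Measurable fun p : EuclideanSpace ℝ (Fin d) × ℝ => φ p.1 :=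
      h.meas_data.comp measurable_fst
    have h2 := hP.comp measurable_swap
    exact h1.mul h2
  have e2 : ∫⁻ τ in Ioo 0 t, ∫⁻ x, φ x * heatSg d τ L x =
      ∫⁻ τ in Ioo 0 t, ((∫⁻ x, U τ x * L x) +
        ∫⁻ s in Ioo 0 τ, ∫⁻ x, U s x ^ 2 * heatSg d (τ - s) L x) :=
    setLIntegral_congr_fun measurableSet_Ioo fun τ hτ => (h.dual hL hτ.1).symm
  rw [e1, e2, lintegral_add_left hUm]
  congr 1
  rw [setLIntegral_triangle hG]
  refine lintegral_congr fun s => ?_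
  rw [setLIntegral_Ioo_shift (fun σ => ∫⁻ x, U s x ^ 2 * heatSg d σ L x)]
  have e3 : ∀ x, U s x ^ 2 * ∫⁻ σ in Ioo 0 (t - s), heatSg d σ L x =
      ∫⁻ σ in Ioo 0 (t - s), U s x ^ 2 * heatSg d σ L x := fun x =>
    (lintegral_const_mul (U s x ^ 2) (hPx x)).symm
  simp_rw [e3]
  refine lintegral_lintegral_swap (Measurable.aemeasurable ?_)
  have h1 : Measurable fun p : ℝ × EuclideanSpace ℝ (Fin d) => U s p.2 ^ 2 :=
    ((h.measurable_slice s).comp measurable_snd).pow_const 2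
  exact h1.mul hP

/-- The weak form of the equation. The pair `(χ, L)` with constant `c` encodes a test function `χ`
with `½ Δ χ = L - c`, all three being nonnegative so that no subtraction occurs. -/
lemma weak (h : IsMildE d φ U) {χ L : EuclideanSpace ℝ (Fin d) → ℝ≥0∞} {c B : ℝ≥0∞}
    (hχ : Measurable χ) (hL : Measurable L) (hLB : ∀ x, L x ≤ B) (hB : B ≠ ∞)
    (hφ : ∫⁻ x, φ x ≠ ∞)
    (hgen : ∀ t x, 0 < t → heatSg d t χ x + c * ENNReal.ofReal t =
      χ x + ∫⁻ σ in Ioo 0 t, heatSg d σ L x) {t : ℝ} (ht : 0 < t) :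
    (∫⁻ x, U t x * χ x) + (∫⁻ s in Ioo 0 t, ∫⁻ x, U s x ^ 2 * χ x) +
      (∫⁻ s in Ioo 0 t, ∫⁻ x, U s x * c) =
      (∫⁻ x, φ x * χ x) + ∫⁻ s in Ioo 0 t, ∫⁻ x, U s x * L x := by
  set Y : ℝ≥0∞ := ∫⁻ s in Ioo 0 t, ∫⁻ x, U s x ^ 2 * ∫⁻ σ in Ioo 0 (t - s), heatSg d σ L x
    with hY
  set Z : ℝ≥0∞ := ∫⁻ s in Ioo 0 t, ∫⁻ x, U s x ^ 2 * (c * ENNReal.ofReal (t - s)) with hZ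
  set X : ℝ≥0∞ := ∫⁻ s in Ioo 0 t, ∫⁻ x, U s x ^ 2 * heatSg d (t - s) χ x with hX
  have hP := measurable_heatSg d hχ
  have hcst : ∀ t x, ∫⁻ τ in Ioo 0 t, heatSg d τ (fun _ => c) x = c * ENNReal.ofReal t := by
    intro t x
    rw [setLIntegral_congr_fun (g := fun _ => c) measurableSet_Ioo
      fun s hs => heatSg_const d hs.1 c x]
    simp
  have hU2 : Measurable fun p : ℝ × EuclideanSpace ℝ (Fin d) => U p.1 p.2 ^ 2 :=
    h.meas.pow_const 2
  have hXm : Measurable fun s => ∫⁻ x, U s x ^ 2 * heatSg d (t - s) χ x := by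
    refine Measurable.lintegral_prod_right' (f := fun p : ℝ × EuclideanSpace ℝ (Fin d) =>
      U p.1 p.2 ^ 2 * heatSg d (t - p.1) χ p.2) (hU2.mul ?_)
    have := hP.comp (f := fun q : ℝ × EuclideanSpace ℝ (Fin d) => (t - q.1, q.2)) (by fun_prop)
    exact this
  have hχm : Measurable fun s => ∫⁻ x, U s x ^ 2 * χ x := by
    refine Measurable.lintegral_prod_right' (f := fun p : ℝ × EuclideanSpace ℝ (Fin d) =>
      U p.1 p.2 ^ 2 * χ p.2) (hU2.mul (hχ.comp measurable_snd))
  have h1 := h.dual hχ ht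
  have h2 := h.dual_integrated hL t
  have h3 := h.dual_integrated (L := fun _ => c) measurable_const t
  simp only [hcst] at h3
  -- the identity for `φ` obtained by integrating `hgen`
  have h4 : (∫⁻ x, φ x * heatSg d t χ x) + ∫⁻ x, φ x * (c * ENNReal.ofReal t) =
      (∫⁻ x, φ x * χ x) + ∫⁻ x, φ x * ∫⁻ σ in Ioo 0 t, heatSg d σ L x := by
    rw [← lintegral_add_right, ← lintegral_add_left]
    · refine lintegral_congr fun x => ?_
      rw [← mul_add, ← mul_add, hgen t x ht]
    · exact h.meas_data.mul hχ
    · exact h.meas_data.mul_const _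
  have h5 : X + Z = (∫⁻ s in Ioo 0 t, ∫⁻ x, U s x ^ 2 * χ x) + Y := by
    rw [hX, hZ, hY, ← lintegral_add_left hXm, ← lintegral_add_left hχm]
    refine setLIntegral_congr_fun measurableSet_Ioo fun s hs => ?_
    have hs2 : Measurable fun x => U s x ^ 2 := (h.measurable_slice s).pow_const 2
    rw [← lintegral_add_right, ← lintegral_add_left]
    · refine lintegral_congr fun x => ?_
      rw [← mul_add, ← mul_add, hgen (t - s) x (sub_pos.2 hs.2)]
    · exact hs2.mul hχ
    · exact hs2.mul_const _
  have hYfin : Y ≠ ∞ := by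
    refine ne_top_of_le_ne_top (b := (∫⁻ x, φ x) * (B * ENNReal.ofReal t))
      (ENNReal.mul_ne_top hφ (ENNReal.mul_ne_top hB ENNReal.ofReal_ne_top)) ?_
    calc Y ≤ ∫⁻ s in Ioo 0 t, ∫⁻ x, U s x ^ 2 * (B * ENNReal.ofReal t) := by
          refine setLIntegral_mono_ae' measurableSet_Ioo (ae_of_all _ fun s hs => ?_)
          refine lintegral_mono fun x => ?_
          gcongr
          calc ∫⁻ σ in Ioo 0 (t - s), heatSg d σ L x ≤ ∫⁻ σ in Ioo 0 (t - s), B :=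
                setLIntegral_mono_ae' measurableSet_Ioo (ae_of_all _ fun σ hσ =>
                  heatSg_le_const d hσ.1 hLB x)
            _ = B * ENNReal.ofReal (t - s) := by simp
            _ ≤ _ := by gcongr; linarith [hs.1]
      _ = (∫⁻ s in Ioo 0 t, ∫⁻ x, U s x ^ 2) * (B * ENNReal.ofReal t) := by
          rw [← lintegral_mul_const]
          · refine lintegral_congr fun s => ?_
            rw [lintegral_mul_const _ ((h.measurable_slice s).pow_const 2)]
          · exact Measurable.lintegral_prod_right' hU2
      _ ≤ _ := by
          gcongr
          rw [← h.mass ht]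
          exact le_add_self
  -- In `[0, ∞]` the combination of `h1`-`h5` only gives the claim with `Y` added to both sides.
  refine (ENNReal.add_left_inj hYfin).1 ?_
  rw [h2, ← hY, h3, ← h1] at h4
  calc _ = (∫⁻ x, U t x * χ x) + ((∫⁻ s in Ioo 0 t, ∫⁻ x, U s x ^ 2 * χ x) + Y) +
        (∫⁻ s in Ioo 0 t, ∫⁻ x, U s x * c) := by ring
    _ = (∫⁻ x, U t x * χ x) + X + ((∫⁻ s in Ioo 0 t, ∫⁻ x, U s x * c) + Z) := by
        rw [← h5]; ring
    _ = _ := by rw [hX, hZ, h4]; ring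

end IsMildE

/-! ### The generator of the heat semigroup -/

/-- The partial derivative `∂ᵢ f`. -/
noncomputable def pderiv {d : ℕ} (i : Fin d) (f : EuclideanSpace ℝ (Fin d) → ℝ)
    (x : EuclideanSpace ℝ (Fin d)) : ℝ := fderiv ℝ f x (EuclideanSpace.single i 1)

/-- The generator `½ Δ f`. -/
noncomputable def halfLap {d : ℕ} (f : EuclideanSpace ℝ (Fin d) → ℝ)
    (x : EuclideanSpace ℝ (Fin d)) : ℝ := (1 / 2) * ∑ i, pderiv i (pderiv i f) x

lemma ContDiff.pderiv {d : ℕ} {f : EuclideanSpace ℝ (Fin d) → ℝ} {n m : WithTop ℕ∞}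
    (hf : ContDiff ℝ n f) (hm : m + 1 ≤ n) (i : Fin d) : ContDiff ℝ m (pderiv i f) :=
  (hf.fderiv_right hm).clm_apply contDiff_const

lemma HasCompactSupport.pderiv {d : ℕ} {f : EuclideanSpace ℝ (Fin d) → ℝ}
    (hf : HasCompactSupport f) (i : Fin d) : HasCompactSupport (pderiv i f) :=
  hf.fderiv_apply ℝ _

lemma continuous_halfLap {d : ℕ} {f : EuclideanSpace ℝ (Fin d) → ℝ} (hf : ContDiff ℝ 2 f) :
    Continuous (halfLap f) := by
  refine continuous_const.mul (continuous_finsetSum _ fun i _ => ?_)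
  have h1 : ContDiff ℝ 1 (pderiv i f) := hf.pderiv (by norm_num) i
  have h2 : ContDiff ℝ 0 (pderiv i (pderiv i f)) := h1.pderiv (by norm_num) i
  exact h2.continuous

lemma fderiv_eq_sum_pderiv {d : ℕ} (f : EuclideanSpace ℝ (Fin d) → ℝ)
    (x z : EuclideanSpace ℝ (Fin d)) : fderiv ℝ f x z = ∑ i, z i * pderiv i f x := by
  have h : z = ∑ i, z i • EuclideanSpace.single i (1 : ℝ) := by
    have := (EuclideanSpace.basisFun (Fin d) ℝ).sum_repr z
    simpa using this.symm
  conv_lhs => rw [h]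
  simp [pderiv]

/-- The standard Gaussian density. -/
noncomputable def gauss {d : ℕ} (z : EuclideanSpace ℝ (Fin d)) : ℝ := heatKernel d 1 0 z

lemma gauss_eq {d : ℕ} (z : EuclideanSpace ℝ (Fin d)) :
    gauss z = (2 * Real.pi) ^ (-(d : ℝ) / 2) * Real.exp (-(1 / 2) * ‖z‖ ^ 2) := by
  simp only [gauss, heatKernel, zero_sub, norm_neg, mul_one]
  congr 2
  ring

lemma gauss_nonneg {d : ℕ} (z : EuclideanSpace ℝ (Fin d)) : 0 ≤ gauss z :=
  heatKernel_nonneg d one_pos 0 z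

lemma integrable_gauss (d : ℕ) : Integrable (gauss (d := d)) :=
  integrable_heatKernel d one_pos 0

lemma hasFDerivAt_gauss {d : ℕ} (z : EuclideanSpace ℝ (Fin d)) :
    HasFDerivAt gauss (-(gauss z) • innerSL ℝ z) z := by
  have h : HasFDerivAt (fun z : EuclideanSpace ℝ (Fin d) => ‖z‖ ^ 2) (2 • innerSL ℝ z) z :=
    (hasStrictFDerivAt_norm_sq z).hasFDerivAt
  have h2 := ((h.const_mul (-(1 / 2) : ℝ)).exp.const_mul ((2 * Real.pi) ^ (-(d : ℝ) / 2)))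
  have h3 : gauss (d := d) = fun z => (2 * Real.pi) ^ (-(d : ℝ) / 2) *
      Real.exp (-(1 / 2) * ‖z‖ ^ 2) := funext gauss_eq
  rw [h3]
  refine h2.congr_fderiv ?_
  ext v
  simp
  ring

lemma continuous_gauss (d : ℕ) : Continuous (gauss (d := d)) :=
  continuous_iff_continuousAt.2 fun z => (hasFDerivAt_gauss z).continuousAt

lemma fderiv_gauss_single {d : ℕ} (z : EuclideanSpace ℝ (Fin d)) (i : Fin d) :
    fderiv ℝ gauss z (EuclideanSpace.single i 1) = -(gauss z * z i) := by
  rw [(hasFDerivAt_gauss z).fderiv]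
  simp [EuclideanSpace.inner_single_right]

lemma integrable_gauss_mul_norm (d : ℕ) :
    Integrable fun z : EuclideanSpace ℝ (Fin d) => gauss z * ‖z‖ := by
  have h := (integrable_exp_neg_sq (d := d) (b := 1 / 4) (by norm_num)).const_mul
    ((2 * Real.pi) ^ (-(d : ℝ) / 2))
  refine h.mono' ((continuous_gauss d).mul continuous_norm).aestronglyMeasurable
    (ae_of_all _ fun z => ?_)
  rw [Real.norm_of_nonneg (mul_nonneg (gauss_nonneg z) (norm_nonneg z)), gauss_eq, mul_assoc]
  gcongr
  have h1 : ‖z‖ ≤ Real.exp (1 / 4 * ‖z‖ ^ 2) := by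
    have := Real.add_one_le_exp (1 / 4 * ‖z‖ ^ 2)
    nlinarith [sq_nonneg (‖z‖ / 2 - 1)]
  calc Real.exp (-(1 / 2) * ‖z‖ ^ 2) * ‖z‖
      ≤ Real.exp (-(1 / 2) * ‖z‖ ^ 2) * Real.exp (1 / 4 * ‖z‖ ^ 2) := by gcongr
    _ = Real.exp (-(1 / 4) * ‖z‖ ^ 2) := by rw [← Real.exp_add]; congr 1; ring

/-- The Gaussian average `E f(x + √s Z)`; it equals `P_s f(x)` for `s > 0` and `f(x)` at `s = 0`. -/
noncomputable def gaussAvg {d : ℕ} (f : EuclideanSpace ℝ (Fin d) → ℝ)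
    (x : EuclideanSpace ℝ (Fin d)) (s : ℝ) : ℝ := ∫ z, gauss z * f (x + √s • z)

lemma gaussAvg_zero {d : ℕ} (f : EuclideanSpace ℝ (Fin d) → ℝ) (x : EuclideanSpace ℝ (Fin d)) :
    gaussAvg f x 0 = f x := by
  have := integral_heatKernel d one_pos 0
  simp only [gaussAvg, Real.sqrt_zero, zero_smul, add_zero, integral_mul_const]
  rw [show ∫ z : EuclideanSpace ℝ (Fin d), gauss z = 1 from this, one_mul]

lemma integral_heatKernel_mul_eq {d : ℕ} (f : EuclideanSpace ℝ (Fin d) → ℝ)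
    (x : EuclideanSpace ℝ (Fin d)) {s : ℝ} (hs : 0 < s) :
    ∫ y, heatKernel d s x y * f y = gaussAvg f x s := by
  have hs' : 0 < √s := Real.sqrt_pos.2 hs
  have h1 : ∫ y, heatKernel d s x y * f y = ∫ y, heatKernel d s x (x + y) * f (x + y) :=
    (integral_add_left_eq_self (fun y => heatKernel d s x y * f y) x).symm
  have h2 := Measure.integral_comp_smul (volume : Measure (EuclideanSpace ℝ (Fin d)))
    (fun y => heatKernel d s x (x + y) * f (x + y)) (√s)
  have h3 : ∀ z : EuclideanSpace ℝ (Fin d),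
      heatKernel d s x (x + √s • z) = (√s ^ d)⁻¹ * gauss z := by
    intro z
    rw [gauss_eq]
    simp only [heatKernel, sub_add_cancel_left, norm_neg, norm_smul, Real.norm_of_nonneg hs'.le,
      mul_pow, Real.sq_sqrt hs.le]
    rw [Real.mul_rpow (by positivity) hs.le, mul_comm ((2 * Real.pi) ^ (-(d : ℝ) / 2)), mul_assoc]
    congr 1
    · rw [← Real.rpow_natCast, ← Real.rpow_neg hs'.le, Real.sqrt_eq_rpow, ← Real.rpow_mul hs.le]
      congr 1
      ring
    · congr 2
      field_simp
  have hp : 0 < √s ^ d := by positivity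
  rw [finrank_euclideanSpace_fin, abs_of_pos (inv_pos.2 hp), smul_eq_mul, ← h1] at h2
  simp only [h3, mul_assoc] at h2
  rw [integral_const_mul] at h2
  exact (mul_left_cancel₀ (inv_pos.2 hp).ne' h2).symm

lemma integrable_gauss_mul {d : ℕ} {f : EuclideanSpace ℝ (Fin d) → ℝ} (hf : Continuous f) {M : ℝ}
    (hM : ∀ x, |f x| ≤ M) : Integrable fun z => gauss z * f z :=
  (integrable_gauss d).mul_bdd hf.aestronglyMeasurable (ae_of_all _ hM)

lemma continuous_gaussAvg {d : ℕ} {f : EuclideanSpace ℝ (Fin d) → ℝ} (hf : Continuous f) {M : ℝ}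
    (hM : ∀ x, |f x| ≤ M) (x : EuclideanSpace ℝ (Fin d)) : Continuous (gaussAvg f x) := by
  refine continuous_of_dominated (bound := fun z => gauss z * M) (fun s => ?_)
    (fun s => ae_of_all _ fun z => ?_) ((integrable_gauss d).mul_const M) (ae_of_all _ fun z => ?_)
  · exact ((continuous_gauss d).mul (hf.comp (by fun_prop))).aestronglyMeasurable
  · rw [norm_mul, Real.norm_of_nonneg (gauss_nonneg z)]
    exact mul_le_mul_of_nonneg_left (hM _) (gauss_nonneg z)
  · refine continuous_const.mul (hf.comp ?_)
    have := Real.continuous_sqrt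
    fun_prop

/-- Gaussian integration by parts. -/
lemma integral_gauss_mul_coord {d : ℕ} {g : EuclideanSpace ℝ (Fin d) → ℝ} (hg : ContDiff ℝ 1 g)
    {M M' : ℝ} (hM : ∀ x, |g x| ≤ M) (i : Fin d) (hM' : ∀ x, |pderiv i g x| ≤ M')
    (x : EuclideanSpace ℝ (Fin d)) (r : ℝ) :
    ∫ z, gauss z * (z i * g (x + r • z)) = r * ∫ z, gauss z * pderiv i g (x + r • z) := by
  have hd : ∀ z, HasFDerivAt (fun z => g (x + r • z)) (r • fderiv ℝ g (x + r • z)) z := by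
    intro z
    have h1 : HasFDerivAt (fun z : EuclideanSpace ℝ (Fin d) => x + r • z)
        (r • ContinuousLinearMap.id ℝ _) z := ((hasFDerivAt_id z).const_smul r).const_add x
    have h2 := ((hg.differentiable one_ne_zero (x + r • z)).hasFDerivAt).comp z h1
    refine h2.congr_fderiv ?_
    ext v
    simp
  have hgc : Continuous fun z => g (x + r • z) := hg.continuous.comp (by fun_prop)
  have hpc : Continuous fun z => pderiv i g (x + r • z) :=
    (hg.pderiv (m := 0) (by norm_num) i).continuous.comp (by fun_prop)
  have e1 : ∀ z, fderiv ℝ (fun z => g (x + r • z)) z (EuclideanSpace.single i 1) =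
      r * pderiv i g (x + r • z) := fun z => by rw [(hd z).fderiv]; rfl
  have key := integral_mul_fderiv_eq_neg_fderiv_mul_of_integrable
    (μ := (volume : Measure (EuclideanSpace ℝ (Fin d)))) (f := gauss)
    (g := fun z => g (x + r • z)) (v := EuclideanSpace.single i 1) ?_ ?_ ?_
    (fun z _ => (hasFDerivAt_gauss z).differentiableAt) (fun z _ => (hd z).differentiableAt)
  · simp only [e1, fderiv_gauss_single, neg_mul, integral_neg, neg_neg] at key
    calc _ = ∫ z : EuclideanSpace ℝ (Fin d), gauss z * z i * g (x + r • z) := by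
          congr 1; funext z; ring
      _ = ∫ z, gauss z * (r * pderiv i g (x + r • z)) := key.symm
      _ = ∫ z, r * (gauss z * pderiv i g (x + r • z)) := by congr 1; funext z; ring
      _ = _ := integral_const_mul _ _
  · simp only [fderiv_gauss_single]
    refine Integrable.mul_bdd (c := M) ?_ hgc.aestronglyMeasurable (ae_of_all _ fun z => hM _)
    refine Integrable.neg ?_
    refine (integrable_gauss_mul_norm d).mono'
      ((continuous_gauss d).mul (by fun_prop)).aestronglyMeasurable (ae_of_all _ fun z => ?_)
    rw [norm_mul, Real.norm_of_nonneg (gauss_nonneg z)]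
    exact mul_le_mul_of_nonneg_left (PiLp.norm_apply_le z i) (gauss_nonneg z)
  · simp only [e1]
    refine integrable_gauss_mul (continuous_const.mul hpc) (M := |r| * M') fun z => ?_
    rw [abs_mul]
    exact mul_le_mul_of_nonneg_left (hM' _) (abs_nonneg r)
  · exact integrable_gauss_mul hgc fun z => hM _

/-- The heat equation for the Gaussian average of a test function. -/
lemma hasDerivAt_gaussAvg {d : ℕ} {f : EuclideanSpace ℝ (Fin d) → ℝ} (hf : ContDiff ℝ 2 f)
    (hc : HasCompactSupport f) (x : EuclideanSpace ℝ (Fin d)) {s : ℝ} (hs : 0 < s) :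
    HasDerivAt (gaussAvg f x) (gaussAvg (halfLap f) x s) s := by
  have hf1 : ContDiff ℝ 1 (fderiv ℝ f) := hf.fderiv_right (by norm_num)
  have hp1 : ∀ i, ContDiff ℝ 1 (pderiv i f) := fun i => hf.pderiv (by norm_num) i
  have hp2 : ∀ i, ContDiff ℝ 0 (pderiv i (pderiv i f)) := fun i => (hp1 i).pderiv (by norm_num) i
  obtain ⟨M0, hM0⟩ := hf.continuous.bounded_above_of_compact_support hc
  obtain ⟨M1, hM1⟩ := hf1.continuous.bounded_above_of_compact_support (hc.fderiv ℝ)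
  have hM1' : 0 ≤ M1 := (norm_nonneg _).trans (hM1 0)
  have hs' : 0 < √s := Real.sqrt_pos.2 hs
  have key := hasDerivAt_integral_of_dominated_loc_of_deriv_le
    (μ := (volume : Measure (EuclideanSpace ℝ (Fin d))))
    (F := fun s z => gauss z * f (x + √s • z)) (x₀ := s) (s := Ioi (s / 2))
    (F' := fun s z => gauss z * (fderiv ℝ f (x + √s • z) z * (1 / (2 * √s))))
    (bound := fun z => gauss z * ‖z‖ * (M1 * (1 / (2 * √(s / 2)))))
    (Ioi_mem_nhds (by linarith)) (Eventually.of_forall fun s => ?_) ?_ ?_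
    (ae_of_all _ fun z σ hσ => ?_) ((integrable_gauss_mul_norm d).mul_const _)
    (ae_of_all _ fun z σ hσ => ?_)
  -- The derivative is `(2√s)⁻¹ ∑ᵢ E[Zᵢ ∂ᵢf(x + √s Z)]`; each term is integrated by parts.
  · refine key.2.congr_deriv ?_
    have e1 : ∀ z : EuclideanSpace ℝ (Fin d),
        gauss z * (fderiv ℝ f (x + √s • z) z * (1 / (2 * √s))) =
        ∑ i, (1 / (2 * √s)) * (gauss z * (z i * pderiv i f (x + √s • z))) := by
      intro z
      rw [fderiv_eq_sum_pderiv, ← Finset.mul_sum, ← Finset.mul_sum]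
      ring
    have hbd : ∀ i, ∃ C, ∀ y, |pderiv i f y| ≤ C := fun i =>
      (hp1 i).continuous.bounded_above_of_compact_support (hc.pderiv i)
    have hbd2 : ∀ i, ∃ C, ∀ y, |pderiv i (pderiv i f) y| ≤ C := fun i =>
      (hp2 i).continuous.bounded_above_of_compact_support ((hc.pderiv i).pderiv i)
    choose C hC using hbd
    choose C' hC' using hbd2
    simp only [e1]
    rw [integral_finsetSum]
    · simp only [gaussAvg, halfLap]
      have e2 : ∀ z : EuclideanSpace ℝ (Fin d),
          gauss z * ((1 / 2) * ∑ i, pderiv i (pderiv i f) (x + √s • z)) =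
          ∑ i, (1 / 2) * (gauss z * pderiv i (pderiv i f) (x + √s • z)) := by
        intro z
        rw [← Finset.mul_sum, ← Finset.mul_sum]
        ring
      simp only [e2]
      rw [integral_finsetSum]
      · refine Finset.sum_congr rfl fun i _ => ?_
        rw [integral_const_mul, integral_const_mul,
          integral_gauss_mul_coord (hp1 i) (hC i) i (hC' i), ← mul_assoc]
        congr 1
        field_simp
      · intro i _
        refine (integrable_gauss_mul ((hp2 i).continuous.comp ?_) fun z => hC' i _).const_mul _
        fun_prop
    · intro i _
      refine Integrable.const_mul ?_ _
      refine ((integrable_gauss_mul_norm d).mul_const (C i)).mono'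
        ((continuous_gauss d).mul (Continuous.mul (by fun_prop)
          ((hp1 i).continuous.comp (by fun_prop)))).aestronglyMeasurable (ae_of_all _ fun z => ?_)
      rw [norm_mul, norm_mul, Real.norm_of_nonneg (gauss_nonneg z), ← mul_assoc]
      refine mul_le_mul ?_ (hC i _) (norm_nonneg _) (mul_nonneg (gauss_nonneg z) (norm_nonneg z))
      exact mul_le_mul_of_nonneg_left (PiLp.norm_apply_le z i) (gauss_nonneg z)
  · exact ((continuous_gauss d).mul (hf.continuous.comp (by fun_prop))).aestronglyMeasurable
  · exact integrable_gauss_mul (hf.continuous.comp (by fun_prop)) fun z => hM0 _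
  · refine ((continuous_gauss d).mul (Continuous.mul ?_ continuous_const)).aestronglyMeasurable
    exact (hf1.continuous.comp (by fun_prop)).clm_apply continuous_id
  · have hσ' : √(s / 2) ≤ √σ := Real.sqrt_le_sqrt (le_of_lt hσ)
    have h2 : 0 < √(s / 2) := Real.sqrt_pos.2 (by linarith)
    rw [norm_mul, norm_mul, Real.norm_of_nonneg (gauss_nonneg z), mul_assoc]
    refine mul_le_mul_of_nonneg_left ?_ (gauss_nonneg z)
    rw [Real.norm_of_nonneg (by positivity : 0 ≤ 1 / (2 * √σ)), ← mul_assoc]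
    have h3 : ‖fderiv ℝ f (x + √σ • z) z‖ ≤ ‖z‖ * M1 := by
      rw [mul_comm]
      exact (fderiv ℝ f (x + √σ • z)).le_of_opNorm_le (hM1 _) z
    gcongr
  · have hσ0 : 0 < σ := lt_trans (by linarith) hσ
    refine HasDerivAt.const_mul _ ?_
    have h1 : HasDerivAt (fun σ : ℝ => x + √σ • z) ((1 / (2 * √σ)) • z) σ :=
      ((Real.hasDerivAt_sqrt hσ0.ne').smul_const z).const_add x
    have h2 := ((hf.differentiable two_ne_zero (x + √σ • z)).hasFDerivAt).comp_hasDerivAt σ h1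
    refine h2.congr_deriv ?_
    rw [map_smul, smul_eq_mul, mul_comm]

/-- `P_t f = f + ∫₀ᵗ P_s (½ Δ f) ds`. -/
lemma gaussAvg_eq_integral {d : ℕ} {f : EuclideanSpace ℝ (Fin d) → ℝ} (hf : ContDiff ℝ 2 f)
    (hc : HasCompactSupport f) {M : ℝ} (hM : ∀ x, |halfLap f x| ≤ M)
    (x : EuclideanSpace ℝ (Fin d)) {t : ℝ} (ht : 0 ≤ t) :
    ∫ s in (0 : ℝ)..t, gaussAvg (halfLap f) x s = gaussAvg f x t - f x := by
  obtain ⟨M0, hM0⟩ := hf.continuous.bounded_above_of_compact_support hc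
  rw [intervalIntegral.integral_eq_sub_of_hasDerivAt_of_le ht
    (continuous_gaussAvg hf.continuous hM0 x).continuousOn
    (fun s hs => hasDerivAt_gaussAvg hf hc x hs.1)
    ((continuous_gaussAvg (continuous_halfLap hf) hM x).intervalIntegrable _ _), gaussAvg_zero]

/-- The same identity for the `[0, ∞]`-valued semigroup, after adding a constant `c ≥ |½ Δ f|`. -/
lemma heatSg_generator {d : ℕ} {f : EuclideanSpace ℝ (Fin d) → ℝ} (hf : ContDiff ℝ 2 f)
    (hc : HasCompactSupport f) (hf0 : ∀ x, 0 ≤ f x) {c : ℝ} (hM : ∀ x, |halfLap f x| ≤ c)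
    {t : ℝ} (ht : 0 < t) (x : EuclideanSpace ℝ (Fin d)) :
    heatSg d t (fun y => ENNReal.ofReal (f y)) x + ENNReal.ofReal c * ENNReal.ofReal t =
      ENNReal.ofReal (f x) +
        ∫⁻ σ in Ioo 0 t, heatSg d σ (fun y => ENNReal.ofReal (halfLap f y + c)) x := by
  have hc0 : 0 ≤ c := (abs_nonneg _).trans (hM 0)
  obtain ⟨M0, hM0⟩ := hf.continuous.bounded_above_of_compact_support hc
  have hl := continuous_halfLap hf
  have hlc : Continuous fun y => halfLap f y + c := hl.add continuous_const
  have hb0 : ∀ y, 0 ≤ halfLap f y + c := fun y => by linarith [(abs_le.1 (hM y)).1]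
  have hb1 : ∀ y, halfLap f y + c ≤ 2 * c := fun y => by linarith [(abs_le.1 (hM y)).2]
  have hb2 : ∀ y, |halfLap f y + c| ≤ 2 * c := fun y => by
    rw [abs_of_nonneg (hb0 y)]; exact hb1 y
  have hsum : ∀ s, gaussAvg (fun y => halfLap f y + c) x s = gaussAvg (halfLap f) x s + c := by
    intro s
    have h1 : Integrable fun z => gauss z * halfLap f (x + √s • z) :=
      integrable_gauss_mul (hl.comp (by fun_prop)) fun z => hM _
    have h2 : ∫ z : EuclideanSpace ℝ (Fin d), gauss z = 1 := integral_heatKernel d one_pos 0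
    simp only [gaussAvg, mul_add]
    rw [integral_add h1 ((integrable_gauss d).mul_const c), integral_mul_const, h2, one_mul]
  have e1 : heatSg d t (fun y => ENNReal.ofReal (f y)) x = ENNReal.ofReal (gaussAvg f x t) := by
    rw [heatSg_ofReal ht x hf.continuous.measurable hf0 fun y => (le_abs_self _).trans (hM0 y),
      integral_heatKernel_mul_eq f x ht]
  have hnn : ∀ s, 0 ≤ gaussAvg (halfLap f) x s + c := fun s => by
    rw [← hsum]
    exact integral_nonneg fun z => mul_nonneg (gauss_nonneg z) (hb0 _)
  have hcont := (continuous_gaussAvg hl hM x).add (continuous_const (y := c))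
  have e2 : ∫⁻ σ in Ioo 0 t, heatSg d σ (fun y => ENNReal.ofReal (halfLap f y + c)) x =
      ENNReal.ofReal (∫ s in (0 : ℝ)..t, (gaussAvg (halfLap f) x s + c)) := by
    refine setLIntegral_Ioo_ofReal ht.le (hcont.intervalIntegrable _ _) (fun s _ => hnn s)
      fun s hs => ?_
    rw [heatSg_ofReal hs.1 x hlc.measurable hb0 hb1,
      integral_heatKernel_mul_eq _ x hs.1, hsum]
  have hg0 : 0 ≤ gaussAvg f x t :=
    integral_nonneg fun z => mul_nonneg (gauss_nonneg z) (hf0 _)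
  have hqint : 0 ≤ ∫ s in (0 : ℝ)..t, (gaussAvg (halfLap f) x s + c) :=
    intervalIntegral.integral_nonneg ht.le fun s _ => hnn s
  rw [e1, e2, ← ENNReal.ofReal_mul hc0, ← ENNReal.ofReal_add hg0 (by positivity),
    ← ENNReal.ofReal_add (hf0 x) hqint]
  congr 1
  rw [intervalIntegral.integral_add
    ((continuous_gaussAvg hl hM x).intervalIntegrable _ _) (by simp),
    gaussAvg_eq_integral hf hc hM x ht.le]
  simp
  ring

/-! ### Cutoff functions -/

lemma pderiv_one_sub_pow_four {d : ℕ} {G : EuclideanSpace ℝ (Fin d) → ℝ} (hG : ContDiff ℝ 2 G)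
    (i : Fin d) : pderiv i (fun x => 1 - G x ^ 4) = fun x => -(4 * G x ^ 3 * pderiv i G x) := by
  funext x
  have h := (hG.differentiable two_ne_zero x).hasFDerivAt
  have h2 := (HasFDerivAt.pow h 4).const_sub 1
  rw [pderiv, h2.fderiv]
  simp [pderiv]

lemma pderiv_pderiv_one_sub_pow_four {d : ℕ} {G : EuclideanSpace ℝ (Fin d) → ℝ}
    (hG : ContDiff ℝ 2 G) (i : Fin d) (x : EuclideanSpace ℝ (Fin d)) :
    pderiv i (pderiv i fun x => 1 - G x ^ 4) x =
      -(G x ^ 2 * (12 * pderiv i G x ^ 2 + 4 * G x * pderiv i (pderiv i G) x)) := by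
  rw [pderiv_one_sub_pow_four hG]
  have h := (hG.differentiable two_ne_zero x).hasFDerivAt
  have hp : ContDiff ℝ 1 (pderiv i G) := hG.pderiv (by norm_num) i
  have h' := (hp.differentiable one_ne_zero x).hasFDerivAt
  have h2 := (((HasFDerivAt.pow h 3).const_mul 4).fun_mul h').fun_neg
  rw [pderiv, h2.fderiv]
  simp [pderiv]
  ring

/-- A cutoff of the form `1 - G⁴`; the fourth power makes `(½ Δ χ)²` controlled by `1 - χ`. -/
lemma exists_cutoff_one (d : ℕ) {δ : ℝ} (hδ : 0 < δ) :
    ∃ (χ : EuclideanSpace ℝ (Fin d) → ℝ) (C : ℝ), 0 ≤ C ∧ ContDiff ℝ 2 χ ∧ HasCompactSupport χ ∧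
      (∀ x, 0 ≤ χ x) ∧ (∀ x, χ x ≤ 1) ∧ (∀ x, ‖x‖ ≤ 1 → χ x = 1) ∧
      (∀ x, 1 + δ < ‖x‖ → χ x = 0 ∧ halfLap χ x = 0) ∧
      ∀ x, halfLap χ x ^ 2 ≤ C * (1 - χ x) := by
  let β : ContDiffBump (0 : EuclideanSpace ℝ (Fin d)) := ⟨1, 1 + δ, one_pos, by linarith⟩
  have hβ : ContDiff ℝ 2 β := β.contDiff
  set G : EuclideanSpace ℝ (Fin d) → ℝ := fun x => 1 - β x with hGdef
  have hG : ContDiff ℝ 2 G := contDiff_const.sub hβ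
  have hG0 : ∀ x, 0 ≤ G x := fun x => sub_nonneg.2 β.le_one
  have hG1 : ∀ x, G x ≤ 1 := fun x => by have := β.nonneg (x := x); simp only [hGdef]; linarith
  have hsupp : ∀ x, 1 + δ < ‖x‖ → (fun x => 1 - G x ^ 4) =ᶠ[nhds x] fun _ => 0 := by
    intro x hx
    have : {y : EuclideanSpace ℝ (Fin d) | 1 + δ < ‖y‖} ∈ nhds x :=
      (isOpen_lt continuous_const continuous_norm).mem_nhds hx
    filter_upwards [this] with y hy
    have h0 : β y = 0 := β.zero_of_le_dist (by simpa [β] using (le_of_lt hy))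
    simp [hGdef, h0]
  have hcs : HasCompactSupport fun x => 1 - G x ^ 4 := by
    refine HasCompactSupport.intro (isCompact_closedBall (0 : EuclideanSpace ℝ (Fin d)) (1 + δ))
      fun x hx => ?_
    exact (hsupp x (by simpa using hx)).self_of_nhds
  have hp1 : ∀ i, ContDiff ℝ 1 (pderiv i G) := fun i => hG.pderiv (by norm_num) i
  have hp1' : ∀ i, ContDiff ℝ 1 (pderiv i β) := fun i => hβ.pderiv (by norm_num) i
  have hGβ : ∀ i, pderiv i G = fun x => - pderiv i β x := by
    intro i
    funext x
    simp only [pderiv, hGdef]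
    rw [fderiv_const_sub]
    simp
  have hp2 : ∀ i, Continuous (pderiv i (pderiv i G)) := fun i =>
    ((hp1 i).pderiv (m := 0) (by norm_num) i).continuous
  have hcβ : HasCompactSupport β := β.hasCompactSupport
  have hcs1 : ∀ i, HasCompactSupport (pderiv i G) := fun i => by
    rw [hGβ]
    exact (hcβ.pderiv i).neg
  have hb1 : ∀ i, ∃ C, ∀ y, |pderiv i G y| ≤ C := fun i =>
    (hp1 i).continuous.bounded_above_of_compact_support (hcs1 i)
  have hb2 : ∀ i, ∃ C, ∀ y, |pderiv i (pderiv i G) y| ≤ C := fun i =>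
    (hp2 i).bounded_above_of_compact_support ((hcs1 i).pderiv i)
  choose C1 hC1 using hb1
  choose C2 hC2 using hb2
  refine ⟨fun x => 1 - G x ^ 4, (1 / 2 * ∑ i, (12 * C1 i ^ 2 + 4 * C2 i)) ^ 2,
    sq_nonneg _, contDiff_const.sub (hG.pow 4), hcs, fun x => ?_, fun x => ?_, fun x hx => ?_,
    fun x hx => ⟨(hsupp x hx).self_of_nhds, ?_⟩, fun x => ?_⟩
  · exact sub_nonneg.2 (pow_le_one₀ (hG0 x) (hG1 x))
  · have := pow_nonneg (hG0 x) 4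
    linarith
  · have : β x = 1 := β.one_of_mem_closedBall (by simpa [β] using hx)
    simp [hGdef, this]
  · have e : ∀ i, pderiv i (fun x => 1 - G x ^ 4) =ᶠ[nhds x] fun _ => 0 := by
      intro i
      have h := (hsupp x hx).fderiv (𝕜 := ℝ)
      filter_upwards [h] with y hy
      simp [pderiv, hy]
    rw [halfLap, Finset.sum_eq_zero, mul_zero]
    intro i _
    rw [pderiv, (e i).fderiv_eq]
    simp
  -- `½ Δ(1 - G⁴)` contains the factor `G²`, whose square is `G⁴ = 1 - χ`.
  · have e : halfLap (fun x => 1 - G x ^ 4) x = -(G x ^ 2 * (1 / 2 * ∑ i,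
        (12 * pderiv i G x ^ 2 + 4 * G x * pderiv i (pderiv i G) x))) := by
      simp only [halfLap, pderiv_pderiv_one_sub_pow_four hG]
      rw [Finset.sum_neg_distrib, ← Finset.mul_sum]
      ring
    have hle : |1 / 2 * ∑ i, (12 * pderiv i G x ^ 2 + 4 * G x * pderiv i (pderiv i G) x)| ≤
        1 / 2 * ∑ i, (12 * C1 i ^ 2 + 4 * C2 i) := by
      rw [abs_mul, abs_of_pos (by norm_num : (0 : ℝ) < 1 / 2)]
      refine mul_le_mul_of_nonneg_left ?_ (by norm_num)
      refine (Finset.abs_sum_le_sum_abs _ _).trans (Finset.sum_le_sum fun i _ => ?_)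
      have h1 : pderiv i G x ^ 2 ≤ C1 i ^ 2 := by
        rw [← sq_abs]
        exact pow_le_pow_left₀ (abs_nonneg _) (hC1 i x) 2
      have h2 : G x * |pderiv i (pderiv i G) x| ≤ C2 i :=
        (mul_le_of_le_one_left (abs_nonneg _) (hG1 x)).trans (hC2 i x)
      refine (abs_add_le _ _).trans ?_
      rw [abs_of_nonneg (by positivity : 0 ≤ 12 * pderiv i G x ^ 2), abs_mul, abs_mul,
        abs_of_nonneg (hG0 x), abs_of_pos (by norm_num : (0 : ℝ) < 4)]
      linarith
    rw [e, neg_sq, mul_pow, sub_sub_cancel, ← pow_mul, mul_comm]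
    refine mul_le_mul_of_nonneg_right ?_ (pow_nonneg (hG0 x) _)
    rw [← sq_abs]
    exact pow_le_pow_left₀ (abs_nonneg _) hle 2

lemma pderiv_comp_smul {d : ℕ} (f : EuclideanSpace ℝ (Fin d) → ℝ) (c : ℝ) (i : Fin d) :
    pderiv i (fun x => f (c • x)) = fun x => c * pderiv i f (c • x) := by
  funext x
  simp only [pderiv]
  rw [fderiv_comp_smul]
  rfl

lemma halfLap_comp_smul {d : ℕ} {f : EuclideanSpace ℝ (Fin d) → ℝ} (hf : ContDiff ℝ 2 f) (c : ℝ)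
    (x : EuclideanSpace ℝ (Fin d)) :
    halfLap (fun x => f (c • x)) x = c ^ 2 * halfLap f (c • x) := by
  have h : ∀ i, pderiv i (pderiv i fun x => f (c • x)) x =
      c ^ 2 * pderiv i (pderiv i f) (c • x) := by
    intro i
    have hp : ContDiff ℝ 1 (pderiv i f) := hf.pderiv (by norm_num) i
    have hd : DifferentiableAt ℝ (fun x => pderiv i f (c • x)) x :=
      ((hp.differentiable one_ne_zero).comp (differentiable_id.const_smul c)) x
    have h1 : pderiv i (fun x => c * pderiv i f (c • x)) x =
        c * pderiv i (fun x => pderiv i f (c • x)) x := by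
      simp only [pderiv] at hd ⊢
      rw [fderiv_const_mul hd]
      rfl
    rw [pderiv_comp_smul, h1, pderiv_comp_smul]
    ring
  simp only [halfLap, h]
  rw [← Finset.mul_sum]
  ring

/-- The cutoff at scale `r`; the constant improves to `C / r⁴`. -/
lemma exists_cutoff (d : ℕ) {δ : ℝ} (hδ : 0 < δ) :
    ∃ C : ℝ, 0 ≤ C ∧ ∀ r : ℝ, 0 < r → ∃ χ : EuclideanSpace ℝ (Fin d) → ℝ,
      ContDiff ℝ 2 χ ∧ HasCompactSupport χ ∧
      (∀ x, 0 ≤ χ x) ∧ (∀ x, χ x ≤ 1) ∧ (∀ x, ‖x‖ ≤ r → χ x = 1) ∧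
      (∀ x, (1 + δ) * r < ‖x‖ → χ x = 0 ∧ halfLap χ x = 0) ∧
      ∀ x, halfLap χ x ^ 2 ≤ C / r ^ 4 * (1 - χ x) := by
  obtain ⟨χ, C, h0, h1, h2, h3, h4, h5, h6, h7⟩ := exists_cutoff_one d hδ
  refine ⟨C, h0, fun r hr => ⟨fun x => χ (r⁻¹ • x), ?_, ?_, fun x => h3 _, fun x => h4 _,
    fun x hx => h5 _ ?_, fun x hx => ?_, fun x => ?_⟩⟩
  · exact h1.comp (contDiff_const_smul _)
  · exact h2.comp_smul (inv_ne_zero hr.ne')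
  · rw [norm_smul, norm_inv, Real.norm_of_nonneg hr.le, inv_mul_le_iff₀ hr, mul_one]
    exact hx
  · have : 1 + δ < ‖r⁻¹ • x‖ := by
      rw [norm_smul, norm_inv, Real.norm_of_nonneg hr.le, lt_inv_mul_iff₀ hr, mul_comm]
      exact hx
    rw [halfLap_comp_smul h1, (h6 _ this).2, mul_zero]
    exact ⟨(h6 _ this).1, rfl⟩
  · rw [halfLap_comp_smul h1]
    calc (r⁻¹ ^ 2 * halfLap χ (r⁻¹ • x)) ^ 2 = (r ^ 4)⁻¹ * halfLap χ (r⁻¹ • x) ^ 2 := by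
          rw [mul_pow, ← pow_mul, inv_pow]
      _ ≤ (r ^ 4)⁻¹ * (C * (1 - χ (r⁻¹ • x))) :=
          mul_le_mul_of_nonneg_left (h7 _) (by positivity)
      _ = _ := by ring

/-! ### Mass balance and weak equation with real integrals -/

namespace BddMild

variable {d : ℕ} {N : ℝ} {φ : EuclideanSpace ℝ (Fin d) → ℝ}
  {u : ℝ → EuclideanSpace ℝ (Fin d) → ℝ}

lemma integrable_slice (h : BddMild d N φ u) (hφ : Integrable φ) {t : ℝ} (ht : 0 < t) :
    Integrable (u t) := by
  have h1 := h.isMildE.mass ht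
  have h2 : ∫⁻ x, ENNReal.ofReal (φ x) ≠ ∞ := by
    rw [← ofReal_integral_eq_lintegral_ofReal hφ (ae_of_all _ h.data_nonneg)]
    exact ENNReal.ofReal_ne_top
  refine (lintegral_ofReal_ne_top_iff_integrable (h.meas t).aestronglyMeasurable
    (ae_of_all _ (h.nonneg t))).1 ?_
  exact ne_top_of_le_ne_top h2 (h1 ▸ le_self_add)

lemma integral_slice_le (h : BddMild d N φ u) (hφ : Integrable φ) {t : ℝ} (ht : 0 < t) :
    ∫ x, u t x ≤ ∫ x, φ x := by
  have h1 := h.isMildE.mass ht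
  have h2 : ∫⁻ x, ENNReal.ofReal (u t x) ≤ ∫⁻ x, ENNReal.ofReal (φ x) := h1 ▸ le_self_add
  rwa [← ofReal_integral_eq_lintegral_ofReal hφ (ae_of_all _ h.data_nonneg),
    ← ofReal_integral_eq_lintegral_ofReal (h.integrable_slice hφ ht) (ae_of_all _ (h.nonneg t)),
    ENNReal.ofReal_le_ofReal_iff (integral_nonneg h.data_nonneg)] at h2

section dominated

variable {g : ℝ → EuclideanSpace ℝ (Fin d) → ℝ} {K : ℝ}

lemma integrable_dom (h : BddMild d N φ u) (hφ : Integrable φ)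
    (hg : Measurable (Function.uncurry g)) (hb : ∀ s x, 0 < s → |g s x| ≤ K * u s x)
    {s : ℝ} (hs : 0 < s) : Integrable (g s) :=
  ((h.integrable_slice hφ hs).const_mul K).mono'
    (hg.comp measurable_prodMk_left).aestronglyMeasurable (ae_of_all _ fun x => hb s x hs)

lemma intervalIntegrable_dom (h : BddMild d N φ u) (hφ : Integrable φ) (hK : 0 ≤ K)
    (hg : Measurable (Function.uncurry g)) (hb : ∀ s x, 0 < s → |g s x| ≤ K * u s x)
    {t : ℝ} (ht : 0 ≤ t) : IntervalIntegrable (fun s => ∫ x, g s x) volume 0 t := by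
  refine intervalIntegrable_of_bdd (M := K * ∫ x, φ x) ht
    (hg.stronglyMeasurable.integral_prod_right').measurable fun s hs => ?_
  calc |∫ x, g s x| ≤ ∫ x, |g s x| := abs_integral_le_integral_abs
    _ ≤ ∫ x, K * u s x := integral_mono (h.integrable_dom hφ hg hb hs.1).abs
        ((h.integrable_slice hφ hs.1).const_mul K) fun x => hb s x hs.1
    _ = K * ∫ x, u s x := integral_const_mul _ _
    _ ≤ _ := mul_le_mul_of_nonneg_left (h.integral_slice_le hφ hs.1) hK

lemma lintegral_dom (h : BddMild d N φ u) (hφ : Integrable φ) (hK : 0 ≤ K)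
    (hg : Measurable (Function.uncurry g)) (hb : ∀ s x, 0 < s → |g s x| ≤ K * u s x)
    (h0 : ∀ s x, 0 ≤ g s x) {G : ℝ → EuclideanSpace ℝ (Fin d) → ℝ≥0∞}
    (hG : ∀ s x, G s x = ENNReal.ofReal (g s x)) {t : ℝ} (ht : 0 ≤ t) :
    ∫⁻ s in Ioo 0 t, ∫⁻ x, G s x = ENNReal.ofReal (∫ s in (0 : ℝ)..t, ∫ x, g s x) := by
  refine setLIntegral_Ioo_ofReal ht (h.intervalIntegrable_dom hφ hK hg hb ht)
    (fun s _ => integral_nonneg (h0 s)) fun s hs => ?_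
  simp only [hG]
  exact (ofReal_integral_eq_lintegral_ofReal (h.integrable_dom hφ hg hb hs.1)
    (ae_of_all _ (h0 s))).symm

end dominated

lemma abs_sq_le (h : BddMild d N φ u) (s : ℝ) (x : EuclideanSpace ℝ (Fin d)) (hs : 0 < s) :
    |u s x ^ 2| ≤ N * u s x := by
  rw [abs_of_nonneg (sq_nonneg _), sq]
  exact mul_le_mul_of_nonneg_right (h.le hs x) (h.nonneg s x)

lemma measurable_sq (h : BddMild d N φ u) : Measurable (Function.uncurry fun s x => u s x ^ 2) :=
  h.sol.1.pow_const 2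

/-- The mass balance `∫ u(t) + ∫₀ᵗ ∫ u² = ∫ φ`. -/
lemma mass_real (h : BddMild d N φ u) (hφ : Integrable φ) {t : ℝ} (ht : 0 < t) :
    (∫ x, u t x) + ∫ s in (0 : ℝ)..t, ∫ x, u s x ^ 2 = ∫ x, φ x := by
  have h1 := h.isMildE.mass ht
  have h2 : ∫⁻ s in Ioo 0 t, ∫⁻ x, ENNReal.ofReal (u s x) ^ 2 =
      ENNReal.ofReal (∫ s in (0 : ℝ)..t, ∫ x, u s x ^ 2) :=
    h.lintegral_dom hφ h.N_nonneg h.measurable_sq h.abs_sq_le (fun s x => sq_nonneg _)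
      (fun s x => (ENNReal.ofReal_pow (h.nonneg s x) 2).symm) ht.le
  have h3 : 0 ≤ ∫ s in (0 : ℝ)..t, ∫ x, u s x ^ 2 :=
    intervalIntegral.integral_nonneg ht.le fun s _ => integral_nonneg fun x => sq_nonneg _
  have h4 : 0 ≤ ∫ x, u t x := integral_nonneg (h.nonneg t)
  rw [h2, ← ofReal_integral_eq_lintegral_ofReal hφ (ae_of_all _ h.data_nonneg),
    ← ofReal_integral_eq_lintegral_ofReal (h.integrable_slice hφ ht) (ae_of_all _ (h.nonneg t)),
    ← ENNReal.ofReal_add h4 h3,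
    ENNReal.ofReal_eq_ofReal_iff (add_nonneg h4 h3) (integral_nonneg h.data_nonneg)] at h1
  exact h1

/-- The equation tested against a smooth function: `∫ u(t)χ = ∫ φχ + ∫₀ᵗ ∫ (u ½Δχ - u²χ)`. -/
lemma weak_real (h : BddMild d N φ u) (hφ : Integrable φ) {χ : EuclideanSpace ℝ (Fin d) → ℝ}
    {c : ℝ} (hχ : ContDiff ℝ 2 χ) (hχc : HasCompactSupport χ) (hχ0 : ∀ x, 0 ≤ χ x)
    (hχ1 : ∀ x, χ x ≤ 1) (hc : ∀ x, |halfLap χ x| ≤ c) {t : ℝ} (ht : 0 < t) :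
    ∫ x, u t x * χ x =
      (∫ x, φ x * χ x) + ∫ s in (0 : ℝ)..t, ∫ x, (u s x * halfLap χ x - u s x ^ 2 * χ x) := by
  have hc0 : 0 ≤ c := (abs_nonneg _).trans (hc 0)
  have hl := continuous_halfLap hχ
  have hχm := hχ.continuous.measurable
  have hb0 : ∀ y, 0 ≤ halfLap χ y + c := fun y => by linarith [(abs_le.1 (hc y)).1]
  have hb1 : ∀ y, halfLap χ y + c ≤ 2 * c := fun y => by linarith [(abs_le.1 (hc y)).2]
  have hφfin : ∫⁻ x, ENNReal.ofReal (φ x) ≠ ∞ := by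
    rw [← ofReal_integral_eq_lintegral_ofReal hφ (ae_of_all _ h.data_nonneg)]
    exact ENNReal.ofReal_ne_top
  have key := h.isMildE.weak (χ := fun x => ENNReal.ofReal (χ x))
    (L := fun x => ENNReal.ofReal (halfLap χ x + c)) (c := ENNReal.ofReal c)
    (B := ENNReal.ofReal (2 * c)) hχm.ennreal_ofReal
    (hl.add continuous_const).measurable.ennreal_ofReal
    (fun x => ENNReal.ofReal_le_ofReal (hb1 x)) ENNReal.ofReal_ne_top hφfin
    (fun t x ht => heatSg_generator hχ hχc hχ0 hc ht x) ht
  have hum : Measurable fun p : ℝ × EuclideanSpace ℝ (Fin d) => u p.1 p.2 := h.sol.1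
  have hχp : Measurable fun p : ℝ × EuclideanSpace ℝ (Fin d) => χ p.2 := hχm.comp measurable_snd
  have hlp : Measurable fun p : ℝ × EuclideanSpace ℝ (Fin d) => halfLap χ p.2 :=
    hl.measurable.comp measurable_snd
  -- The terms of `key` as real integrands: `u²χ`, `u c` and `u (½Δχ + c)`.
  have m1 : Measurable (Function.uncurry fun s x => u s x ^ 2 * χ x) := (hum.pow_const 2).mul hχp
  have m2 : Measurable (Function.uncurry fun s x => u s x * c) := hum.mul_const c
  have m3 : Measurable (Function.uncurry fun s x => u s x * (halfLap χ x + c)) :=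
    hum.mul (hlp.add_const c)
  have b1 : ∀ s x, 0 < s → |u s x ^ 2 * χ x| ≤ N * u s x := fun s x hs => by
    rw [abs_mul, abs_of_nonneg (hχ0 x)]
    exact (mul_le_of_le_one_right (abs_nonneg _) (hχ1 x)).trans (h.abs_sq_le s x hs)
  have b2 : ∀ s x, 0 < s → |u s x * c| ≤ c * u s x := fun s x _ => by
    rw [abs_of_nonneg (mul_nonneg (h.nonneg s x) hc0), mul_comm]
  have b3 : ∀ s x, 0 < s → |u s x * (halfLap χ x + c)| ≤ 2 * c * u s x := fun s x _ => by
    rw [abs_of_nonneg (mul_nonneg (h.nonneg s x) (hb0 x)), mul_comm]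
    exact mul_le_mul_of_nonneg_right (hb1 x) (h.nonneg s x)
  have p1 : ∀ s x, 0 ≤ u s x ^ 2 * χ x := fun s x => mul_nonneg (sq_nonneg _) (hχ0 x)
  have p2 : ∀ s x, 0 ≤ u s x * c := fun s x => mul_nonneg (h.nonneg s x) hc0
  have p3 : ∀ s x, 0 ≤ u s x * (halfLap χ x + c) := fun s x => mul_nonneg (h.nonneg s x) (hb0 x)
  have i0 : Integrable fun x => u t x * χ x :=
    (h.integrable_slice hφ ht).mul_bdd (c := 1) hχm.aestronglyMeasurable
      (ae_of_all _ fun x => by rw [Real.norm_of_nonneg (hχ0 x)]; exact hχ1 x)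
  have i1 : Integrable fun x => φ x * χ x :=
    hφ.mul_bdd (c := 1) hχm.aestronglyMeasurable
      (ae_of_all _ fun x => by rw [Real.norm_of_nonneg (hχ0 x)]; exact hχ1 x)
  have q0 : ∫⁻ x, ENNReal.ofReal (u t x) * ENNReal.ofReal (χ x) =
      ENNReal.ofReal (∫ x, u t x * χ x) := by
    rw [ofReal_integral_eq_lintegral_ofReal i0
      (ae_of_all _ fun x => mul_nonneg (h.nonneg t x) (hχ0 x))]
    exact lintegral_congr fun x => (ENNReal.ofReal_mul (h.nonneg t x)).symm
  have q1 : ∫⁻ x, ENNReal.ofReal (φ x) * ENNReal.ofReal (χ x) =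
      ENNReal.ofReal (∫ x, φ x * χ x) := by
    rw [ofReal_integral_eq_lintegral_ofReal i1
      (ae_of_all _ fun x => mul_nonneg (h.data_nonneg x) (hχ0 x))]
    exact lintegral_congr fun x => (ENNReal.ofReal_mul (h.data_nonneg x)).symm
  have q2 := h.lintegral_dom hφ h.N_nonneg m1 b1 p1
    (G := fun s x => ENNReal.ofReal (u s x) ^ 2 * ENNReal.ofReal (χ x))
    (fun s x => by rw [← ENNReal.ofReal_pow (h.nonneg s x), ENNReal.ofReal_mul (sq_nonneg _)]) ht.le
  have q3 := h.lintegral_dom hφ hc0 m2 b2 p2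
    (G := fun s x => ENNReal.ofReal (u s x) * ENNReal.ofReal c)
    (fun s x => by rw [ENNReal.ofReal_mul (h.nonneg s x)]) ht.le
  have q4 := h.lintegral_dom hφ (by positivity) m3 b3 p3
    (G := fun s x => ENNReal.ofReal (u s x) * ENNReal.ofReal (halfLap χ x + c))
    (fun s x => by rw [ENNReal.ofReal_mul (h.nonneg s x)]) ht.le
  have r0 : 0 ≤ ∫ x, u t x * χ x := integral_nonneg fun x => mul_nonneg (h.nonneg t x) (hχ0 x)
  have r1 : 0 ≤ ∫ x, φ x * χ x := integral_nonneg fun x => mul_nonneg (h.data_nonneg x) (hχ0 x)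
  have r2 : 0 ≤ ∫ s in (0 : ℝ)..t, ∫ x, u s x ^ 2 * χ x :=
    intervalIntegral.integral_nonneg ht.le fun s _ => integral_nonneg (p1 s)
  have r3 : 0 ≤ ∫ s in (0 : ℝ)..t, ∫ x, u s x * c :=
    intervalIntegral.integral_nonneg ht.le fun s _ => integral_nonneg (p2 s)
  have r4 : 0 ≤ ∫ s in (0 : ℝ)..t, ∫ x, u s x * (halfLap χ x + c) :=
    intervalIntegral.integral_nonneg ht.le fun s _ => integral_nonneg (p3 s)
  rw [q0, q1, q2, q3, q4, ← ENNReal.ofReal_add r0 r2, ← ENNReal.ofReal_add (add_nonneg r0 r2) r3,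
    ← ENNReal.ofReal_add r1 r4, ENNReal.ofReal_eq_ofReal_iff (by positivity) (by positivity)] at key
  have e : ∫ s in (0 : ℝ)..t, ∫ x, (u s x * halfLap χ x - u s x ^ 2 * χ x) =
      (∫ s in (0 : ℝ)..t, ∫ x, u s x * (halfLap χ x + c)) - (∫ s in (0 : ℝ)..t, ∫ x, u s x * c) -
        ∫ s in (0 : ℝ)..t, ∫ x, u s x ^ 2 * χ x := by
    have t1 := h.intervalIntegrable_dom hφ h.N_nonneg m1 b1 ht.le
    have t2 := h.intervalIntegrable_dom hφ hc0 m2 b2 ht.le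
    have t3 := h.intervalIntegrable_dom hφ (by positivity) m3 b3 ht.le
    rw [← intervalIntegral.integral_sub t3 t2, ← intervalIntegral.integral_sub (t3.sub t2) t1]
    refine intervalIntegral.integral_congr_ae (ae_of_all _ fun s hs => ?_)
    rw [uIoc_of_le ht.le] at hs
    have s1 := h.integrable_dom hφ m1 b1 hs.1
    have s2 := h.integrable_dom hφ m2 b2 hs.1
    have s3 := h.integrable_dom hφ m3 b3 hs.1
    have s4 : (∫ x, u s x * (halfLap χ x + c)) - (∫ x, u s x * c) - ∫ x, u s x ^ 2 * χ x =
        ∫ x, (u s x * (halfLap χ x + c) - u s x * c - u s x ^ 2 * χ x) := by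
      have s5 : Integrable fun x => u s x * (halfLap χ x + c) - u s x * c := s3.sub s2
      rw [integral_sub s5 s1, integral_sub s3 s2]
    rw [s4]
    congr 1
    funext x
    ring
  rw [e]
  linarith

end BddMild

/-! ### Mass bounds at time one -/

namespace BddMild

variable {d : ℕ} {N : ℝ} {φ : EuclideanSpace ℝ (Fin d) → ℝ}
  {u : ℝ → EuclideanSpace ℝ (Fin d) → ℝ}

/-- The lower bound on the mass: by `le_ode`, `t ↦ (1 + N t) ∫ u(t)` is nondecreasing. -/
lemma le_integral_one (h : BddMild d N φ u) (hφ : Integrable φ) :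
    ∫ x, φ x ≤ (1 + N) * ∫ x, u 1 x := by
  have hQ := h.intervalIntegrable_dom hφ h.N_nonneg h.measurable_sq h.abs_sq_le zero_le_one
  have key := weight_mul_primitive (a := fun t => 1 + N * t) (a' := fun _ => N) (∫ x, φ x) hQ.neg
    (fun t => by simpa using ((hasDerivAt_id' t).const_mul N).const_add 1) continuous_const
  simp only [Pi.neg_apply, intervalIntegral.integral_neg, mul_one, mul_zero, add_zero,
    one_mul] at key
  have hm1 := h.mass_real hφ one_pos
  rw [show ((∫ x, φ x) + -∫ s in (0 : ℝ)..1, ∫ x, u s x ^ 2) = ∫ x, u 1 x by linarith] at key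
  rw [key, le_add_iff_nonneg_right, intervalIntegral.integral_of_le zero_le_one]
  refine setIntegral_nonneg measurableSet_Ioc fun t ht => ?_
  have hmt := h.mass_real hφ ht.1
  have hpos : 0 < 1 + N * t := by
    have := mul_nonneg h.N_nonneg ht.1.le
    linarith
  have h1 : (1 + N * t) * ∫ x, u t x ^ 2 ≤ N * ∫ x, u t x := by
    rw [← integral_const_mul, ← integral_const_mul]
    refine integral_mono ((h.integrable_dom hφ h.measurable_sq h.abs_sq_le ht.1).const_mul _)
      ((h.integrable_slice hφ ht.1).const_mul _) fun x => ?_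
    have h2 := (le_div_iff₀ hpos).1 (h.le_ode ht.1 x)
    calc (1 + N * t) * u t x ^ 2 = u t x * (1 + N * t) * u t x := by ring
      _ ≤ N * u t x := mul_le_mul_of_nonneg_right h2 (h.nonneg t x)
  rw [show ((∫ x, φ x) + -∫ s in (0 : ℝ)..t, ∫ x, u s x ^ 2) = ∫ x, u t x by linarith]
  linarith

/-- The integrand of the mass balance minus `(1 - t²)`-weighted weak equation is bounded
independently of `u`: complete squares in `tu` and in `u`. Here `l` plays the role of `½ Δ χ`. -/
lemma quadratic_bound {u χ l t C : ℝ} (hχ0 : 0 ≤ χ) (hχ1 : χ ≤ 1) (hC : 0 ≤ C)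
    (hl : l ^ 2 ≤ C * (1 - χ)) (ht0 : 0 ≤ t) (ht1 : t ≤ 1) :
    -u ^ 2 - (-(2 * t) * (u * χ) + (1 - t ^ 2) * (u * l - u ^ 2 * χ)) ≤ 1 + C / 4 := by
  have e : -u ^ 2 - (-(2 * t) * (u * χ) + (1 - t ^ 2) * (u * l - u ^ 2 * χ)) =
      χ * (1 - (t * u - 1) ^ 2) + (-((1 - χ) * u ^ 2) - (1 - t ^ 2) * (u * l)) := by ring
  rw [e]
  refine add_le_add ?_ ?_
  · nlinarith [mul_nonneg hχ0 (sq_nonneg (t * u - 1))]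
  · rcases eq_or_lt_of_le hχ1 with h1 | h1
    · have : l = 0 := by
        rw [h1, sub_self, mul_zero] at hl
        exact pow_eq_zero_iff two_ne_zero |>.1 (le_antisymm hl (sq_nonneg l))
      rw [this, h1]
      simp only [sub_self, zero_mul, mul_zero, neg_zero]
      positivity
    · have hw : 0 < 1 - χ := sub_pos.2 h1
      have ha0 : 0 ≤ 1 - t ^ 2 := by nlinarith
      have ha1 : 1 - t ^ 2 ≤ 1 := by nlinarith
      have h2 : (1 - t ^ 2) ^ 2 * l ^ 2 ≤ C * (1 - χ) :=
        (mul_le_of_le_one_left (sq_nonneg l) (pow_le_one₀ ha0 ha1)).trans hl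
      have h3 : 0 ≤ (1 - χ) * (C / 4 - (-((1 - χ) * u ^ 2) - (1 - t ^ 2) * (u * l))) := by
        nlinarith [sq_nonneg ((1 - χ) * u + (1 - t ^ 2) * l / 2)]
      linarith [nonneg_of_mul_nonneg_right h3 hw]

/-- The upper bound, independent of the size of the data: the weights `1` and `1 - t²` make the
initial data drop out of the difference of the mass balance and the weak equation, and
`quadratic_bound` controls the integrand that is left, which is nonpositive off `B(R)`. -/
lemma integral_one_le (h : BddMild d N φ u) (hφ : Integrable φ)
    {χ : EuclideanSpace ℝ (Fin d) → ℝ} {C R : ℝ} (hχ : ContDiff ℝ 2 χ) (hχc : HasCompactSupport χ)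
    (hχ0 : ∀ x, 0 ≤ χ x) (hχ1 : ∀ x, χ x ≤ 1) (hC : 0 ≤ C)
    (hl : ∀ x, halfLap χ x ^ 2 ≤ C * (1 - χ x))
    (hR : ∀ x, R < ‖x‖ → χ x = 0 ∧ halfLap χ x = 0) (hφχ : ∀ x, φ x * χ x = φ x) :
    ∫ x, u 1 x ≤ (1 + C / 4) * volume.real (closedBall (0 : EuclideanSpace ℝ (Fin d)) R) := by
  have hN := h.N_nonneg
  have hc : ∀ x, |halfLap χ x| ≤ √C := fun x => Real.abs_le_sqrt
    ((hl x).trans (mul_le_of_le_one_right hC (by linarith [hχ0 x])))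
  have hsC : 0 ≤ √C := Real.sqrt_nonneg C
  have hum : Measurable fun p : ℝ × EuclideanSpace ℝ (Fin d) => u p.1 p.2 := h.sol.1
  have hχp : Measurable fun p : ℝ × EuclideanSpace ℝ (Fin d) => χ p.2 :=
    hχ.continuous.measurable.comp measurable_snd
  have hlp : Measurable fun p : ℝ × EuclideanSpace ℝ (Fin d) => halfLap χ p.2 :=
    (continuous_halfLap hχ).measurable.comp measurable_snd
  have hmin : Measurable fun p : ℝ × EuclideanSpace ℝ (Fin d) => min p.1 1 :=
    measurable_fst.min measurable_const
  have m1 : Measurable (Function.uncurry fun s x => u s x * halfLap χ x - u s x ^ 2 * χ x) :=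
    (hum.mul hlp).sub ((hum.pow_const 2).mul hχp)
  have m2 : Measurable (Function.uncurry fun s x => u s x * χ x) := hum.mul hχp
  -- `min s 1` replaces the weight `s`, so that the domination below holds for all `s > 0`
  have m3 : Measurable (Function.uncurry fun s x => -(2 * min s 1) * (u s x * χ x) +
      (1 - min s 1 ^ 2) * (u s x * halfLap χ x - u s x ^ 2 * χ x)) :=
    ((hmin.const_mul 2).neg.mul m2).add (((hmin.pow_const 2).const_sub 1).mul m1)
  have b1 : ∀ s x, 0 < s → |u s x * halfLap χ x - u s x ^ 2 * χ x| ≤ (√C + N) * u s x := by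
    intro s x hs
    refine (abs_sub _ _).trans ?_
    rw [abs_mul, abs_mul, abs_of_nonneg (h.nonneg s x), abs_of_nonneg (hχ0 x), add_mul]
    refine add_le_add ?_ ((mul_le_of_le_one_right (abs_nonneg _) (hχ1 x)).trans
      (h.abs_sq_le s x hs))
    rw [mul_comm]
    exact mul_le_mul_of_nonneg_right (hc x) (h.nonneg s x)
  have b2 : ∀ s x, 0 < s → |u s x * χ x| ≤ 1 * u s x := by
    intro s x _
    rw [abs_of_nonneg (mul_nonneg (h.nonneg s x) (hχ0 x)), one_mul]
    exact mul_le_of_le_one_right (h.nonneg s x) (hχ1 x)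
  have b3 : ∀ s x, 0 < s → |-(2 * min s 1) * (u s x * χ x) +
      (1 - min s 1 ^ 2) * (u s x * halfLap χ x - u s x ^ 2 * χ x)| ≤
        (2 + (√C + N)) * u s x := by
    intro s x hs
    have h0 : 0 ≤ min s 1 := le_min hs.le zero_le_one
    have h1 : min s 1 ≤ 1 := min_le_right _ _
    refine (abs_add_le _ _).trans ?_
    rw [abs_mul (-(2 * min s 1)), abs_mul (1 - min s 1 ^ 2), abs_neg,
      abs_of_nonneg (by positivity : 0 ≤ 2 * min s 1),
      abs_of_nonneg (by nlinarith : 0 ≤ 1 - min s 1 ^ 2), add_mul]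
    refine add_le_add (mul_le_mul (by linarith) ?_ (abs_nonneg _) zero_le_two) ?_
    · exact (b2 s x hs).trans_eq (one_mul _)
    · exact (mul_le_of_le_one_left (abs_nonneg _) (by nlinarith)).trans (b1 s x hs)
  have iq := h.intervalIntegrable_dom hφ (by positivity) m1 b1 zero_le_one
  have ig := h.intervalIntegrable_dom hφ (by positivity) m3 b3 zero_le_one
  have iQ := h.intervalIntegrable_dom hφ hN h.measurable_sq h.abs_sq_le zero_le_one
  have iQn : IntervalIntegrable (fun s => -∫ x, u s x ^ 2) volume 0 1 := iQ.neg
  have key := weight_mul_primitive (a := fun t => 1 - t ^ 2) (a' := fun t => -(2 * t)) (∫ x, φ x) iq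
    (fun t => by simpa using ((hasDerivAt_id' t).pow 2).const_sub 1) (by fun_prop)
  have e1 : ∫ t in (0 : ℝ)..1, (-(2 * t) * ((∫ x, φ x) +
        ∫ s in (0 : ℝ)..t, ∫ x, (u s x * halfLap χ x - u s x ^ 2 * χ x)) +
        (1 - t ^ 2) * ∫ x, (u t x * halfLap χ x - u t x ^ 2 * χ x)) =
      ∫ t in (0 : ℝ)..1, ∫ x, (-(2 * min t 1) * (u t x * χ x) +
      (1 - min t 1 ^ 2) * (u t x * halfLap χ x - u t x ^ 2 * χ x)) := by
    refine intervalIntegral.integral_congr_ae (ae_of_all _ fun t ht => ?_)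
    rw [uIoc_of_le zero_le_one] at ht
    have hw := h.weak_real hφ hχ hχc hχ0 hχ1 hc ht.1
    simp only [hφχ] at hw
    rw [← hw, min_eq_left ht.2, integral_add, integral_const_mul, integral_const_mul]
    · exact (h.integrable_dom hφ m2 b2 ht.1).const_mul _
    · exact (h.integrable_dom hφ m1 b1 ht.1).const_mul _
  rw [e1] at key
  have hm1 := h.mass_real hφ one_pos
  have e2 : ∫ x, u 1 x = ∫ t in (0 : ℝ)..1, ((-∫ x, u t x ^ 2) -
      ∫ x, (-(2 * min t 1) * (u t x * χ x) +
      (1 - min t 1 ^ 2) * (u t x * halfLap χ x - u t x ^ 2 * χ x))) := by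
    rw [intervalIntegral.integral_sub iQn ig, intervalIntegral.integral_neg]
    rw [one_pow, sub_self, zero_mul, zero_pow two_ne_zero, sub_zero] at key
    linarith
  rw [e2]
  have hvol : volume (closedBall (0 : EuclideanSpace ℝ (Fin d)) R) ≠ ∞ :=
    measure_closedBall_lt_top.ne
  calc _ ≤ ∫ t in (0 : ℝ)..1, (1 + C / 4) *
        volume.real (closedBall (0 : EuclideanSpace ℝ (Fin d)) R) := by
        refine intervalIntegral.integral_mono_on_of_le_Ioo zero_le_one (iQn.sub ig) (by simp)
          fun t ht => ?_
        have j1 := h.integrable_dom hφ h.measurable_sq h.abs_sq_le ht.1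
        have j2 := h.integrable_dom hφ m3 b3 ht.1
        have j1n : Integrable fun x => -u t x ^ 2 := j1.neg
        rw [← integral_neg, ← integral_sub j1n j2]
        have e3 : ∫ x, (closedBall (0 : EuclideanSpace ℝ (Fin d)) R).indicator
            (fun _ => 1 + C / 4) x =
            (1 + C / 4) * volume.real (closedBall (0 : EuclideanSpace ℝ (Fin d)) R) := by
          rw [integral_indicator measurableSet_closedBall, setIntegral_const, smul_eq_mul, mul_comm]
        rw [← e3]
        refine integral_mono (j1n.sub j2) ((integrable_indicator_iff
          measurableSet_closedBall).2 (integrableOn_const hvol)) fun x => ?_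
        simp only [min_eq_left ht.2.le]
        by_cases hx : x ∈ closedBall (0 : EuclideanSpace ℝ (Fin d)) R
        · rw [indicator_of_mem hx]
          exact quadratic_bound (hχ0 x) (hχ1 x) hC (hl x) ht.1.le ht.2.le
        · rw [indicator_of_notMem hx]
          obtain ⟨g1, g2⟩ := hR x (by simpa using hx)
          rw [g1, g2]
          have := sq_nonneg (u t x)
          simp only [mul_zero, sub_zero, add_zero]
          linarith
    _ = _ := by simp

end BddMild

/-! ### The limit -/

/-- Monotone convergence for a bounded increasing sequence, phrased with real integrals: the
supremum has integral between each `∫ fₙ` and any common bound of these. -/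
lemma integral_iSup_bounds {α : Type*} [MeasurableSpace α] {μ : Measure α} {f : ℕ → α → ℝ}
    {K B : ℝ} (hm : ∀ n, Measurable (f n)) (h0 : ∀ n x, 0 ≤ f n x)
    (hmono : ∀ x, Monotone fun n => f n x) (hK : ∀ n x, f n x ≤ K) (hi : ∀ n, Integrable (f n) μ)
    (hB : ∀ n, ∫ x, f n x ∂μ ≤ B) :
    (∀ n, ∫ x, f n x ∂μ ≤ ∫ x, ⨆ n, f n x ∂μ) ∧ ∫ x, ⨆ n, f n x ∂μ ≤ B := by
  have hbdd : ∀ x, BddAbove (range fun n => f n x) := fun x =>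
    ⟨K, by rintro _ ⟨n, rfl⟩; exact hK n x⟩
  have hB0 : 0 ≤ B := (integral_nonneg (h0 0)).trans (hB 0)
  have hs0 : ∀ x, 0 ≤ ⨆ n, f n x := fun x => (h0 0 x).trans (le_ciSup (hbdd x) 0)
  have hsm : Measurable fun x => ⨆ n, f n x :=
    measurable_of_tendsto_metrizable (f := f) hm
      (tendsto_pi_nhds.2 fun x => tendsto_atTop_ciSup (hmono x) (hbdd x))
  have hl : ∀ n, ∫⁻ x, ENNReal.ofReal (f n x) ∂μ = ENNReal.ofReal (∫ x, f n x ∂μ) := fun n =>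
    (ofReal_integral_eq_lintegral_ofReal (hi n) (ae_of_all _ (h0 n))).symm
  have hle : ∫⁻ x, ENNReal.ofReal (⨆ n, f n x) ∂μ ≤ ENNReal.ofReal B := by
    have ht := lintegral_tendsto_of_tendsto_of_monotone (μ := μ)
      (f := fun n x => ENNReal.ofReal (f n x)) (F := fun x => ENNReal.ofReal (⨆ n, f n x))
      (fun n => (hm n).ennreal_ofReal.aemeasurable)
      (ae_of_all _ fun x i j hij => ENNReal.ofReal_le_ofReal (hmono x hij))
      (ae_of_all _ fun x => ENNReal.tendsto_ofReal (tendsto_atTop_ciSup (hmono x) (hbdd x)))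
    refine le_of_tendsto' ht fun n => ?_
    rw [hl]
    exact ENNReal.ofReal_le_ofReal (hB n)
  have hsi : Integrable (fun x => ⨆ n, f n x) μ :=
    (lintegral_ofReal_ne_top_iff_integrable hsm.aestronglyMeasurable (ae_of_all _ hs0)).1
      (ne_top_of_le_ne_top ENNReal.ofReal_ne_top hle)
  refine ⟨fun n => integral_mono (hi n) hsi fun x => le_ciSup (hbdd x) n, ?_⟩
  rwa [← ofReal_integral_eq_lintegral_ofReal hsi (ae_of_all _ hs0),
    ENNReal.ofReal_le_ofReal_iff hB0] at hle

lemma volume_real_closedBall_two {r : ℝ} (hr : 0 ≤ r) :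
    volume.real (closedBall (0 : EuclideanSpace ℝ (Fin 2)) r) = Real.pi * r ^ 2 := by
  rw [measureReal_def, EuclideanSpace.volume_closedBall_fin_two, ENNReal.toReal_mul,
    ENNReal.toReal_pow, ENNReal.toReal_ofReal hr, mul_comm]
  rw [ENNReal.toReal_ofReal Real.pi_pos.le]

lemma volume_real_ball_two {r : ℝ} (hr : 0 ≤ r) :
    volume.real (ball (0 : EuclideanSpace ℝ (Fin 2)) r) = Real.pi * r ^ 2 := by
  rw [measureReal_def, EuclideanSpace.volume_ball_fin_two, ENNReal.toReal_mul,
    ENNReal.toReal_pow, ENNReal.toReal_ofReal hr, mul_comm]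
  rw [ENNReal.toReal_ofReal Real.pi_pos.le]

lemma bddMild_indicator {r M N : ℝ} {v : ℝ → EuclideanSpace ℝ (Fin 2) → ℝ} (hM : 0 ≤ M)
    (hMN : M ≤ N) (hv : IsMildSolution 2 ((ball 0 r).indicator fun _ => M) v) :
    BddMild 2 N ((ball 0 r).indicator fun _ => M) v where
  sol := hv
  meas_data := measurable_const.indicator measurableSet_ball
  data_nonneg x := indicator_nonneg (fun _ _ => hM) x
  data_le x := (indicator_le_self' (fun _ _ => hM) x).trans hMN

/-- The mass at time `1` of `supₙ vₙ`, where `vₙ` starts from `n·1_{B(r)}`, lies between `πr²` and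
`(1 + C_δ/(4r⁴)) π(1+δ)²r²`. -/
lemma mass_bounds {δ : ℝ} (hδ : 0 < δ) : ∃ C : ℝ, ∀ r : ℝ, 0 < r →
    ∀ v : ℕ → ℝ → EuclideanSpace ℝ (Fin 2) → ℝ,
    (∀ n : ℕ, 1 ≤ n → IsMildSolution 2
      ((ball (0 : EuclideanSpace ℝ (Fin 2)) r).indicator fun _ => (n : ℝ)) (v n)) →
    Real.pi * r ^ 2 ≤ ∫ x, ⨆ n : ℕ, v (n + 1) 1 x ∧
    ∫ x, ⨆ n : ℕ, v (n + 1) 1 x ≤ (1 + C / r ^ 4 / 4) * (Real.pi * ((1 + δ) * r) ^ 2) := by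
  obtain ⟨C, hC, hcut⟩ := exists_cutoff 2 hδ
  refine ⟨C, fun r hr v hv => ?_⟩
  obtain ⟨χ, hχ, hχc, hχ0, hχ1, hχr, hχR, hχl⟩ := hcut r hr
  have hb : ∀ (n : ℕ) (N : ℝ), ((n + 1 : ℕ) : ℝ) ≤ N → BddMild 2 N
      ((ball 0 r).indicator fun _ => ((n + 1 : ℕ) : ℝ)) (v (n + 1)) := fun n N h =>
    bddMild_indicator (by positivity) h (hv (n + 1) (by lia))
  have hφi : ∀ n : ℕ, Integrable ((ball (0 : EuclideanSpace ℝ (Fin 2)) r).indicator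
      fun _ => ((n + 1 : ℕ) : ℝ)) := fun n =>
    (integrable_indicator_iff measurableSet_ball).2 (integrableOn_const measure_ball_lt_top.ne)
  have hup : ∀ n : ℕ, ∫ x, v (n + 1) 1 x ≤
      (1 + C / r ^ 4 / 4) * (Real.pi * ((1 + δ) * r) ^ 2) := by
    intro n
    rw [← volume_real_closedBall_two (by positivity : 0 ≤ (1 + δ) * r)]
    refine (hb n _ le_rfl).integral_one_le (hφi n) hχ hχc hχ0 hχ1 (by positivity) hχl hχR
      fun x => ?_
    by_cases hx : x ∈ ball (0 : EuclideanSpace ℝ (Fin 2)) r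
    · rw [hχr x (by simpa using (mem_ball_zero_iff.1 hx).le), mul_one]
    · rw [indicator_of_notMem hx, zero_mul]
  have hmono : ∀ x, Monotone fun n => v (n + 1) 1 x := fun x =>
    monotone_nat_of_le_succ fun n =>
      (hb n ((n + 1 + 1 : ℕ) : ℝ) (by push_cast; linarith)).compare (hb (n + 1) _ le_rfl)
        (fun y => indicator_le_indicator (by push_cast; linarith)) one_pos x
  have hle1 : ∀ n x, v (n + 1) 1 x ≤ 1 := fun n x => by
    refine ((hb n _ le_rfl).le_ode one_pos x).trans ?_
    rw [mul_one, div_le_one (by positivity)]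
    linarith
  obtain ⟨h1, h2⟩ := integral_iSup_bounds (f := fun n => v (n + 1) 1)
    (fun n => (hb n _ le_rfl).meas 1) (fun n x => (hb n _ le_rfl).nonneg 1 x) hmono hle1
    (fun n => (hb n _ le_rfl).integrable_slice (hφi n) one_pos) hup
  refine ⟨?_, h2⟩
  have hlow : ∀ n : ℕ, (1 - 1 / ((n : ℝ) + 1)) * (Real.pi * r ^ 2) ≤
      ∫ x, ⨆ n : ℕ, v (n + 1) 1 x := by
    intro n
    refine le_trans ?_ (h1 n)
    have h3 := (hb n _ le_rfl).le_integral_one (hφi n)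
    rw [integral_indicator measurableSet_ball, setIntegral_const, volume_real_ball_two hr.le,
      smul_eq_mul] at h3
    push_cast at h3
    have h4 : 0 ≤ ∫ x, v (n + 1) 1 x := integral_nonneg ((hb n _ le_rfl).nonneg 1)
    have h5 : 0 ≤ Real.pi * r ^ 2 := by positivity
    have h6 : (1 - 1 / ((n : ℝ) + 1)) ≤ ((n : ℝ) + 1) / (1 + (n + 1)) := by
      rw [one_sub_div (by positivity), div_le_div_iff₀ (by positivity) (by positivity)]
      nlinarith
    refine (mul_le_mul_of_nonneg_right h6 h5).trans ?_
    rw [div_mul_eq_mul_div, div_le_iff₀ (by positivity)]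
    linarith
  have hlim : Tendsto (fun n : ℕ => (1 - 1 / ((n : ℝ) + 1)) * (Real.pi * r ^ 2)) atTop
      (nhds ((1 - 0) * (Real.pi * r ^ 2))) :=
    (tendsto_one_div_add_atTop_nhds_zero_nat.const_sub 1).mul_const _
  rw [sub_zero, one_mul] at hlim
  exact le_of_tendsto' hlim hlow

/-- in `d = 2`, with `u_r(t,x) = sup_{n≥1} u_{r,n}(t,x)` where `u_{r,n}`
solves the equation with data `n·1_{B(r)}`, one has `lim_{r→∞} (πr²)⁻¹ ∫ u_r(1,x) dx = 1`. -/
theorem stmt_19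
    (u : ℝ → ℕ → ℝ → EuclideanSpace ℝ (Fin 2) → ℝ)
    (hu : ∀ r : ℝ, 0 < r → ∀ n : ℕ, 1 ≤ n →
      IsMildSolution 2
        ((Metric.ball (0 : EuclideanSpace ℝ (Fin 2)) r).indicator fun _ => (n : ℝ))
        (u r n)) :
    Tendsto (fun r : ℝ => (Real.pi * r ^ 2)⁻¹ * ∫ x, ⨆ n : ℕ, u r (n + 1) 1 x)
      atTop (nhds 1) := by
  have hlow : ∀ r : ℝ, 0 < r →
      1 ≤ (Real.pi * r ^ 2)⁻¹ * ∫ x, ⨆ n : ℕ, u r (n + 1) 1 x := by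
    intro r hr
    obtain ⟨C, hC⟩ := mass_bounds one_pos
    rw [inv_mul_eq_div, le_div_iff₀ (by positivity), one_mul]
    exact (hC r hr (u r) (hu r hr)).1
  refine tendsto_order.2 ⟨fun a ha => ?_, fun b hb => ?_⟩
  · filter_upwards [eventually_gt_atTop 0] with r hr using ha.trans_le (hlow r hr)
  · obtain ⟨δ, hδ, hδb⟩ : ∃ δ : ℝ, 0 < δ ∧ (1 + δ) ^ 2 < b := by
      have hc : Tendsto (fun δ : ℝ => (1 + δ) ^ 2) (nhdsWithin 0 (Ioi 0)) (nhds ((1 + 0) ^ 2)) :=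
        (Continuous.tendsto (by fun_prop) 0).mono_left nhdsWithin_le_nhds
      have h1 := hc.eventually (gt_mem_nhds (by simpa using hb : ((1 : ℝ) + 0) ^ 2 < b))
      obtain ⟨δ, h2, h3⟩ := (h1.and self_mem_nhdsWithin).exists
      exact ⟨δ, h3, h2⟩
    obtain ⟨C, hC⟩ := mass_bounds hδ
    have hlim : Tendsto (fun r : ℝ => (1 + C / r ^ 4 / 4) * (1 + δ) ^ 2) atTop
        (nhds ((1 + 0 / 4) * (1 + δ) ^ 2)) :=
      ((((tendsto_const_nhds (x := C)).div_atTop (tendsto_pow_atTop four_ne_zero)).div_const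
        4).const_add 1).mul_const _
    have hev := hlim.eventually (gt_mem_nhds (by simpa using hδb))
    filter_upwards [eventually_gt_atTop 0, hev] with r hr hrb
    refine lt_of_le_of_lt ?_ hrb
    rw [inv_mul_eq_div, div_le_iff₀ (by positivity)]
    refine ((hC r hr (u r) (hu r hr)).2).trans_eq ?_
    ring
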